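/- Global controllability of the double forced periodic multiparticle system: Assume Φ is admissible. Consider the periodic multiparticle system with two controlling forces applied to particles P₁ and Pₙ, i.e. q̇_k = p_k for k = 1,…,n, ṗ_k = φ(q_{k−1}−q_k) − φ(q_k−q_{k+1}) for k = 2,…,n−1, ṗ₁ = φ(qₙ−q₁) − φ(q₁−q₂) + u(t), ṗₙ = φ(q_{n−1}−qₙ) − φ(qₙ−q₁) + v(t). Then for every pair of points x̃, x̂ ∈ ℝ^{2n} there exist a time θ > 0, measurable essentially bounded controls u, v : [0,θ] → ℝ, and an absolutely continuous solution of this system steering x̃ at time 0 to x̂ at time θ. -/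

import Mathlib

/-!
The forces on `P₁` and `Pₙ` are arbitrary, so a `C¹` path with `q̇ = p` is a trajectory as soon as
the particles `P₂, …, Pₙ₋₁` obey their equations of motion (`IsPath`, `Step.ctrlReach`). `Reach` is
reachability along finitely many such paths. It is compatible with time reversal:
`(q, p) → (q', p')` gives `(q', -p') → (q, -p)` (`Reach.reverse`). Four facts carry the proof.

*Approach to equilibrium.* A feedback on the two ends cuts the bond between `Pₙ` and `P₁`, attaches
`P₁` to the origin by a spring, replaces the cut bond by a repulsion with potential
`l * exp (qₙ - q₁)`, and damps both ends (`damped`). The resulting `energy` has compact sublevel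
sets, `Φ` being bounded below and tending to `+∞` at `+∞`, and is dissipated at rate `p₁² + pₙ²`.
At a minimum of the energy on the closure of the reachable set nothing is dissipated. Then the end
particles are at rest, so the force in the first bond is constant; level sets of `Φ'` being
countable by analyticity, the first gap is constant, so the second particle is at rest, and so on
along the chain (`rest_of_no_dissipation`). Hence every state can be steered arbitrarily close to
an equilibrium, at which all bonds carry the force `l * exp (qₙ - q₁)`.

*Regularity.* Again by countability, for all but countably many `l` no bond of such an equilibrium
is a critical point of `Φ'` (`Admissible.exists_regular`).

*Local controllability.* At a regular equilibrium `Φ'` is locally invertible at every bond, so the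
positions of the first two particles determine the others: the equation of motion of particle
`k + 1` can be solved for the position of particle `k + 2`. Multiplying the deviation of the first
two positions along a closed-loop motion by a cutoff in time gives a path that follows this motion
at first and ends at rest at the equilibrium. So all nearby states are steered exactly to the
equilibrium (`RegularEq.eventually_step`).

*Globalization.* By continuous dependence on the initial point, a whole neighbourhood of any state
is steered to one and the same state of rest (`Admissible.exists_rest`). States of rest are fixed by
time reversal, so mutual reachability is an equivalence relation with open classes on the connected
space of states of rest, and has a single class (`Admissible.reach_rest`). Time reversal finally
yields a route from a state of rest to the target.
-/

open scoped BigOperators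
open MeasureTheory Filter Set

noncomputable section

/-- The state space ℝ^{2n}, with coordinates (q,p). -/
abbrev State (n : ℕ) := (Fin n → ℝ) × (Fin n → ℝ)

/-- The drift vector field of the periodic multiparticle system,
`f(q,p) = Σ p_k ∂/∂q_k + Σ (φ(q_{k-1}-q_k) - φ(q_k-q_{k+1})) ∂/∂p_k` with `φ = Φ'`,
with cyclic indexing in `Fin n`. -/
def drift (n : ℕ) [NeZero n] (Φ : ℝ → ℝ) (x : State n) : State n :=
  (x.2, fun k => deriv Φ (x.1 (k - 1) - x.1 k) - deriv Φ (x.1 k - x.1 (k + 1)))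

/-- The momentum coordinate vector `e_{p_j} = ∂/∂p_j`. -/
def ep (n : ℕ) [NeZero n] (j : Fin n) : State n := (0, Pi.single j 1)

/-- The position coordinate vector `e_{q_j} = ∂/∂q_j`. -/
def eq' (n : ℕ) [NeZero n] (j : Fin n) : State n := (Pi.single j 1, 0)

/-- `Φ` is admissible: real analytic, bounded below, and `Φ(y) → +∞` as `y → +∞`. -/
def Admissible (Φ : ℝ → ℝ) : Prop :=
  (∀ x, AnalyticAt ℝ Φ x) ∧ BddBelow (Set.range Φ) ∧ Tendsto Φ atTop atTop

/-- `Φ` is generic: for no `b` is `Φ''` even or odd about `b`. -/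
def Generic (Φ : ℝ → ℝ) : Prop :=
  ∀ b : ℝ,
    (¬ ∀ t : ℝ, deriv (deriv Φ) (b + t) = deriv (deriv Φ) (b - t)) ∧
    (¬ ∀ t : ℝ, deriv (deriv Φ) (b + t) = - deriv (deriv Φ) (b - t))

/-- Lie bracket of vector fields: `[X,Y](x) = DY(x)·X(x) − DX(x)·Y(x)`. -/
def lieBracket {n : ℕ} (X Y : State n → State n) : State n → State n :=
  fun x => fderiv ℝ Y x (X x) - fderiv ℝ X x (Y x)

/-- Admissible trajectory of the single forced system `ẋ = f(x) + u(t) g`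
(in absolutely-continuous/integral form). -/
def IsTrajectory (n : ℕ) [NeZero n] (Φ : ℝ → ℝ) (θ : ℝ) (u : ℝ → ℝ)
    (x : ℝ → State n) : Prop :=
  ContinuousOn x (Set.Icc 0 θ) ∧
  ∀ t ∈ Set.Icc 0 θ,
    x t = x 0 + ∫ s in (0:ℝ)..t, (drift n Φ (x s) + u s • ep n 0)

/-- Admissible trajectory of the double forced periodic system
`ẋ = f(x) + u(t) ∂/∂p₁ + v(t) ∂/∂pₙ` (in absolutely-continuous/integral form). -/
def IsTrajectory2 (n : ℕ) [NeZero n] (Φ : ℝ → ℝ) (θ : ℝ) (u v : ℝ → ℝ)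
    (x : ℝ → State n) : Prop :=
  ContinuousOn x (Set.Icc 0 θ) ∧
  ∀ t ∈ Set.Icc 0 θ,
    x t = x 0 + ∫ s in (0:ℝ)..t,
      (drift n Φ (x s) + u s • ep n 0 + v s • ep n (-1))

open scoped Topology ContDiff

/-! ### Cyclic indices -/

lemma val_neg_one (n : ℕ) [NeZero n] (hn : 3 ≤ n) : (-1 : Fin n).val = n - 1 := by
  obtain ⟨m, rfl⟩ : ∃ m, n = m + 1 := ⟨n - 1, by omega⟩
  rw [Nat.add_sub_cancel]
  exact Fin.coe_neg_one

lemma val_succ_of_ne (n : ℕ) [NeZero n] (hn : 3 ≤ n) (k : Fin n) (hk : k ≠ -1) :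
    (k + 1).val = k.val + 1 := by
  have h1 : k.val ≠ n - 1 := fun h => hk (Fin.ext (by rw [h, val_neg_one n hn]))
  exact Fin.val_add_one_of_lt' (by have := k.isLt; omega)

lemma zero_ne_neg_one (n : ℕ) [NeZero n] (hn : 3 ≤ n) : (0 : Fin n) ≠ -1 := by
  intro h
  have := congrArg Fin.val h
  rw [val_neg_one n hn] at this
  simp at this
  omega

lemma succ_ne_zero_of_ne (n : ℕ) [NeZero n] (k : Fin n) (hk : k ≠ -1) : k + 1 ≠ 0 :=
  fun h => hk (eq_neg_of_add_eq_zero_left h)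

lemma pred_ne_of_ne (n : ℕ) [NeZero n] (k : Fin n) (hk : k ≠ 0) : k - 1 ≠ -1 := fun h =>
  hk (by rwa [sub_eq_neg_self] at h)

/-- Induction along the open chain `0, 1, …, n - 1 = -1`. -/
lemma fin_chain_induction (n : ℕ) [NeZero n] (hn : 3 ≤ n) {P : Fin n → Prop} (h0 : P 0)
    (hs : ∀ k, k ≠ -1 → P k → P (k + 1)) : ∀ k, P k := by
  have key : ∀ j : ℕ, ∀ k : Fin n, k.val = j → P k := by
    intro j
    induction j with
    | zero =>
      intro k hk
      have : k = 0 := Fin.ext (by simpa using hk)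
      rwa [this]
    | succ j ih =>
      intro k hk
      have hk0 : k ≠ 0 := by rintro rfl; simp at hk
      have hne := pred_ne_of_ne n k hk0
      have hv := val_succ_of_ne n hn (k - 1) hne
      rw [sub_add_cancel] at hv
      have := hs (k - 1) hne (ih _ (by omega))
      rwa [sub_add_cancel] at this
  exact fun k => key _ k rfl

/-! ### Admissible steps and reachability -/

/-- `x`, with velocity `x'`, is a `C¹` path on `[0, T]` along which every particle except `P₁`
and `Pₙ` obeys the equations of motion. Since the forces on `P₁` and `Pₙ` are unrestricted,
nothing but `q̇ = p` is required of these two particles. -/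
def IsPath (n : ℕ) [NeZero n] (Φ : ℝ → ℝ) (T : ℝ) (x x' : ℝ → State n) : Prop :=
  ContinuousOn x' (Icc 0 T) ∧ ∀ t ∈ Icc 0 T, HasDerivWithinAt x (x' t) (Icc 0 T) t ∧
    (x' t).1 = (x t).2 ∧ ∀ k, k ≠ 0 → k ≠ -1 → (x' t).2 k = (drift n Φ (x t)).2 k

/-- `b` is reached from `a` along a single `C¹` path. -/
def Step (n : ℕ) [NeZero n] (Φ : ℝ → ℝ) (a b : State n) : Prop :=
  ∃ T > 0, ∃ x x', IsPath n Φ T x x' ∧ x 0 = a ∧ x T = b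

/-- `b` is reached from `a` along finitely many `C¹` paths. -/
def Reach (n : ℕ) [NeZero n] (Φ : ℝ → ℝ) : State n → State n → Prop :=
  Relation.ReflTransGen (Step n Φ)

/-- Reversal of the momenta. -/
def rev {n : ℕ} (x : State n) : State n := (x.1, -x.2)

lemma rev_rev {n : ℕ} (x : State n) : rev (rev x) = x := by simp [rev]

lemma Step.reverse {n : ℕ} [NeZero n] {Φ : ℝ → ℝ} {a b : State n} (h : Step n Φ a b) :
    Step n Φ (rev b) (rev a) := by
  obtain ⟨T, hT, x, x', ⟨hc, hx⟩, rfl, rfl⟩ := h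
  have hmap : MapsTo (fun t : ℝ => T - t) (Icc 0 T) (Icc 0 T) := by
    intro t ht
    exact ⟨by simpa using ht.2, by simpa using ht.1⟩
  refine ⟨T, hT, fun t => rev (x (T - t)), fun t => (-(x' (T - t)).1, (x' (T - t)).2),
    ⟨?_, ?_⟩, by simp, by simp⟩
  · have : ContinuousOn (fun t => x' (T - t)) (Icc 0 T) :=
      hc.comp (by fun_prop) hmap
    exact (this.fst.neg).prodMk this.snd
  · intro t ht
    obtain ⟨hd, h1, h2⟩ := hx (T - t) (hmap ht)
    refine ⟨?_, ?_, ?_⟩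
    · have hs : HasDerivWithinAt (fun t : ℝ => T - t) (-1) (Icc 0 T) t := by
        simpa using (hasDerivWithinAt_id t (Icc 0 T)).const_sub T
      have := HasDerivWithinAt.scomp t hd hs hmap
      have h3 := (hasFDerivAt_fst (𝕜 := ℝ) (p := x (T - t))).comp_hasDerivWithinAt t this
      have h4 := ((hasFDerivAt_snd (𝕜 := ℝ) (p := x (T - t))).comp_hasDerivWithinAt t this).neg
      convert! h3.prodMk h4 using 1
      simp
    · simp [rev, h1]
    · intro k hk hk'
      simpa [rev, drift] using h2 k hk hk'

lemma Reach.reverse {n : ℕ} [NeZero n] {Φ : ℝ → ℝ} {a b : State n} (h : Reach n Φ a b) :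
    Reach n Φ (rev b) (rev a) := by
  induction h with
  | refl => exact Relation.ReflTransGen.refl
  | tail _ h ih => exact Relation.ReflTransGen.head h.reverse ih

/-! ### From chains of paths to bounded controls -/

/-- Reachability of `b` from `a` by bounded measurable controls, with a trajectory in integral
form that is continuous on the whole line. -/
def CtrlReach (n : ℕ) [NeZero n] (Φ : ℝ → ℝ) (a b : State n) : Prop :=
  ∃ (θ : ℝ) (u v : ℝ → ℝ) (x : ℝ → State n), 0 < θ ∧ Measurable u ∧ Measurable v ∧
    (∃ C : ℝ, ∀ t, |u t| ≤ C ∧ |v t| ≤ C) ∧ Continuous x ∧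
    (∀ t ∈ Icc 0 θ, x t = x 0 + ∫ s in (0:ℝ)..t,
      (drift n Φ (x s) + u s • ep n 0 + v s • ep n (-1))) ∧ x 0 = a ∧ x θ = b

lemma continuous_drift (n : ℕ) [NeZero n] {Φ : ℝ → ℝ} (hφ : Continuous (deriv Φ)) :
    Continuous (drift n Φ) := by
  unfold drift
  fun_prop

lemma intervalIntegrable_field (n : ℕ) [NeZero n] {Φ : ℝ → ℝ} (hφ : Continuous (deriv Φ))
    {u v : ℝ → ℝ} {x : ℝ → State n} (hu : Measurable u) (hv : Measurable v) {C : ℝ}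
    (hC : ∀ t, |u t| ≤ C ∧ |v t| ≤ C) (hx : Continuous x) (a b : ℝ) :
    IntervalIntegrable (fun s => drift n Φ (x s) + u s • ep n 0 + v s • ep n (-1)) volume a b := by
  have key : ∀ w : ℝ → ℝ, Measurable w → (∀ t, |w t| ≤ C) → ∀ e : State n,
      IntervalIntegrable (fun s => w s • e) volume a b := by
    intro w hw hwC e
    have : IntervalIntegrable w volume a b := by
      refine (intervalIntegrable_const (c := C)).mono_fun hw.aestronglyMeasurable ?_
      refine Eventually.of_forall fun t => ?_
      simpa using (hwC t).trans (le_abs_self C)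
    exact ⟨this.1.smul_const e, this.2.smul_const e⟩
  exact ((((continuous_drift n hφ).comp hx).intervalIntegrable a b).add
    (key u hu (fun t => (hC t).1) _)).add (key v hv (fun t => (hC t).2) _)

lemma CtrlReach.trans {n : ℕ} [NeZero n] {Φ : ℝ → ℝ} (hφ : Continuous (deriv Φ))
    {a b c : State n} (h1 : CtrlReach n Φ a b) (h2 : CtrlReach n Φ b c) : CtrlReach n Φ a c := by
  obtain ⟨θ₁, u₁, v₁, x₁, hθ₁, hu₁, hv₁, ⟨C₁, hC₁⟩, hx₁, hi₁, ha, hb⟩ := h1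
  obtain ⟨θ₂, u₂, v₂, x₂, hθ₂, hu₂, hv₂, ⟨C₂, hC₂⟩, hx₂, hi₂, hb', hc⟩ := h2
  set u : ℝ → ℝ := fun t => if t ≤ θ₁ then u₁ t else u₂ (t - θ₁) with hu
  set v : ℝ → ℝ := fun t => if t ≤ θ₁ then v₁ t else v₂ (t - θ₁) with hv
  set x : ℝ → State n := fun t => if t ≤ θ₁ then x₁ t else x₂ (t - θ₁) with hx
  have hum : Measurable u := Measurable.ite measurableSet_Iic hu₁ (hu₂.comp (measurable_sub_const _))
  have hvm : Measurable v := Measurable.ite measurableSet_Iic hv₁ (hv₂.comp (measurable_sub_const _))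
  have hC : ∀ t, |u t| ≤ max C₁ C₂ ∧ |v t| ≤ max C₁ C₂ := by
    intro t
    simp only [hu, hv]
    split_ifs
    · exact ⟨(hC₁ t).1.trans (le_max_left _ _), (hC₁ t).2.trans (le_max_left _ _)⟩
    · exact ⟨(hC₂ _).1.trans (le_max_right _ _), (hC₂ _).2.trans (le_max_right _ _)⟩
  have hxc : Continuous x := by
    refine Continuous.if_le hx₁ (hx₂.comp (continuous_sub_right _)) continuous_id continuous_const ?_
    intro t ht
    subst ht
    simp [hb, hb']
  have hx0 : x 0 = a := by simp [hx, hθ₁.le, ha]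
  have first : ∀ t ∈ Icc 0 θ₁, x t = x 0 + ∫ s in (0:ℝ)..t,
      (drift n Φ (x s) + u s • ep n 0 + v s • ep n (-1)) := by
    intro t ht
    have : x t = x₁ t := by simp [hx, ht.2]
    rw [this, hi₁ t ht, hx0, ha]
    congr 1
    apply intervalIntegral.integral_congr
    intro s hs
    rw [uIcc_of_le ht.1] at hs
    have : s ≤ θ₁ := hs.2.trans ht.2
    simp [hx, hu, hv, this]
  refine ⟨θ₁ + θ₂, u, v, x, by positivity, hum, hvm, ⟨_, hC⟩, hxc, ?_, hx0, ?_⟩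
  · intro t ht
    rcases le_or_gt t θ₁ with h | h
    · exact first t ⟨ht.1, h⟩
    · rw [← intervalIntegral.integral_add_adjacent_intervals
        (intervalIntegrable_field n hφ hum hvm hC hxc 0 θ₁)
        (intervalIntegrable_field n hφ hum hvm hC hxc θ₁ t), ← add_assoc,
        ← first θ₁ ⟨hθ₁.le, le_rfl⟩]
      have e1 : x t = x₂ (t - θ₁) := by simp [hx, h]
      have e2 : x θ₁ = x₂ 0 := by simp [hx, hb, hb']
      rw [e1, e2, hi₂ (t - θ₁) ⟨by linarith, by linarith [ht.2]⟩]
      congr 1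
      have := intervalIntegral.integral_comp_sub_right (a := θ₁) (b := t)
        (fun s => drift n Φ (x₂ s) + u₂ s • ep n 0 + v₂ s • ep n (-1)) θ₁
      rw [sub_self] at this
      rw [← this]
      refine intervalIntegral.integral_congr_ae (Eventually.of_forall fun s hs => ?_)
      rw [uIoc_of_le h.le] at hs
      have : ¬ s ≤ θ₁ := not_le.2 hs.1
      simp [hx, hu, hv, this]
  · simp only [hx]
    rw [if_neg (by linarith), add_sub_cancel_left, hc]

lemma Step.ctrlReach {n : ℕ} [NeZero n] (hn : 3 ≤ n) {Φ : ℝ → ℝ} (hφ : Continuous (deriv Φ))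
    {a b : State n} (h : Step n Φ a b) : CtrlReach n Φ a b := by
  obtain ⟨T, hT, x, x', ⟨hc, hx⟩, ha, hb⟩ := h
  have hxc : ContinuousOn x (Icc 0 T) := fun t ht => (hx t ht).1.continuousWithinAt
  -- The momentum defect of the path is the control that realizes it.
  set w : ℝ → State n := fun t => x' t - drift n Φ (x t) with hw
  have hwc : ContinuousOn w (Icc 0 T) := hc.sub ((continuous_drift n hφ).comp_continuousOn hxc)
  have hcomp : ∀ k, ContinuousOn (fun t => (w t).2 k) (Icc 0 T) := fun k =>
    (continuous_apply k).comp_continuousOn hwc.snd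
  have hext : ∀ k, ∃ u : ℝ → ℝ, Continuous u ∧ (∃ C, ∀ t, |u t| ≤ C) ∧
      ∀ t ∈ Icc 0 T, u t = (w t).2 k := by
    intro k
    have hr := continuousOn_iff_continuous_domRestrict.1 (hcomp k)
    obtain ⟨C, hC⟩ := isCompact_Icc.exists_bound_of_continuousOn (hcomp k)
    refine ⟨IccExtend hT.le ((Icc 0 T).domRestrict fun t => (w t).2 k), hr.Icc_extend', ⟨C, ?_⟩, ?_⟩
    · intro t
      exact hC _ (projIcc 0 T hT.le t).2
    · intro t ht
      rw [IccExtend_of_mem _ _ ht]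
      rfl
  obtain ⟨u, huc, ⟨Cu, hCu⟩, hu⟩ := hext 0
  obtain ⟨v, hvc, ⟨Cv, hCv⟩, hv⟩ := hext (-1)
  have h0 := zero_ne_neg_one n hn
  have hfield : ∀ t ∈ Icc 0 T, drift n Φ (x t) + u t • ep n 0 + v t • ep n (-1) = x' t := by
    intro t ht
    obtain ⟨-, h1, h2⟩ := hx t ht
    refine Prod.ext ?_ ?_
    · simp [ep, drift, h1]
    · funext k
      rcases eq_or_ne k 0 with rfl | hk
      · simp [ep, hu t ht, h0, hw]
      · rcases eq_or_ne k (-1) with rfl | hk'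
        · simp [ep, hv t ht, h0.symm, hw]
        · simp [ep, hk, hk', h2 k hk hk']
  have hX := (continuousOn_iff_continuous_domRestrict.1 hxc).Icc_extend' (h := hT.le)
  have hXe : ∀ t ∈ Icc 0 T, IccExtend hT.le ((Icc 0 T).domRestrict x) t = x t := fun t ht => by
    rw [IccExtend_of_mem _ _ ht]
    rfl
  refine ⟨T, u, v, IccExtend hT.le ((Icc 0 T).domRestrict x), hT, huc.measurable, hvc.measurable,
    ⟨max Cu Cv, fun t => ⟨(hCu t).trans (le_max_left _ _), (hCv t).trans (le_max_right _ _)⟩⟩,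
    hX, ?_, ?_, ?_⟩
  · intro t ht
    rw [hXe t ht, hXe 0 ⟨le_rfl, hT.le⟩]
    have hsub : Icc 0 t ⊆ Icc 0 T := Icc_subset_Icc_right ht.2
    have hint : ∫ s in (0:ℝ)..t, (drift n Φ (IccExtend hT.le ((Icc 0 T).domRestrict x) s)
        + u s • ep n 0 + v s • ep n (-1)) = ∫ s in (0:ℝ)..t, x' s := by
      apply intervalIntegral.integral_congr
      intro s hs
      rw [uIcc_of_le ht.1] at hs
      simp only [hXe s (hsub hs)]
      exact hfield s (hsub hs)
    rw [hint, intervalIntegral.integral_eq_sub_of_hasDerivAt_of_le ht.1 (hxc.mono hsub)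
      (fun s hs => (hx s (hsub (Ioo_subset_Icc_self hs))).1.hasDerivAt
        (Icc_mem_nhds hs.1 (hs.2.trans_le ht.2)))
      ((hc.mono hsub).intervalIntegrable_of_Icc ht.1)]
    abel
  · rw [hXe 0 ⟨le_rfl, hT.le⟩, ha]
  · rw [hXe T ⟨hT.le, le_rfl⟩, hb]

/-! ### Perturbation of the initial point of an ODE -/

/-- Solutions of `ẋ = F(x) + b(t)` on a fixed interval persist, and depend in a Lipschitz way on the
initial point. Multiplying `F` by a bump function that is `1` near the given
solution makes the field bounded and globally Lipschitz, so solutions exist on all of `[0, T]`;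
Grönwall's inequality keeps them where the bump is `1`. -/
lemma exists_perturbed_solution {E : Type*} [NormedAddCommGroup E] [NormedSpace ℝ E]
    [FiniteDimensional ℝ E] {F : E → E} (hF : ContDiff ℝ 1 F) {T : ℝ} (hT : 0 < T) {b X : ℝ → E}
    (hb : ContinuousOn b (Icc 0 T))
    (hX : ∀ t ∈ Icc 0 T, HasDerivWithinAt X (F (X t) + b t) (Icc 0 T) t) :
    ∃ C : ℝ, ∃ δ > 0, ∀ x₀, ‖x₀ - X 0‖ < δ → ∃ Y : ℝ → E, Y 0 = x₀ ∧
      ∀ t ∈ Icc 0 T, HasDerivWithinAt Y (F (Y t) + b t) (Icc 0 T) t ∧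
        ‖Y t - X t‖ ≤ C * ‖x₀ - X 0‖ := by
  have : ProperSpace E := FiniteDimensional.proper ℝ E
  have hXc : ContinuousOn X (Icc 0 T) := fun t ht => (hX t ht).continuousWithinAt
  obtain ⟨M, hM⟩ := isCompact_Icc.exists_bound_of_continuousOn hXc
  have hM0 : 0 ≤ M := (norm_nonneg _).trans (hM 0 ⟨le_rfl, hT.le⟩)
  obtain ⟨B', hB'⟩ := isCompact_Icc.exists_bound_of_continuousOn hb
  let χ : ContDiffBump (0 : E) := ⟨M + 1, M + 2, by linarith, by linarith⟩
  set G : E → E := fun x => χ x • F x with hG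
  have hGs : ContDiff ℝ 1 G := χ.contDiff.smul hF
  have hGc : HasCompactSupport G := χ.hasCompactSupport.smul_right
  obtain ⟨K, hK⟩ := hGs.lipschitzWith_of_hasCompactSupport hGc (by simp)
  obtain ⟨B, hB⟩ := hGc.exists_bound_of_continuous hGs.continuous
  have hGF : ∀ x, ‖x‖ ≤ M + 1 → G x = F x := by
    intro x hx
    have : χ x = 1 := χ.one_of_mem_closedBall (by simpa [χ] using hx)
    simp [hG, this]
  have hB0 : 0 ≤ B := (norm_nonneg _).trans (hB 0)
  have hB'0 : 0 ≤ B' := (norm_nonneg _).trans (hB' 0 ⟨le_rfl, hT.le⟩)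
  have hlip : ∀ t : ℝ, LipschitzWith K (fun x => G x + b t) := fun t => by
    simpa using hK.add (LipschitzWith.const (b t))
  refine ⟨Real.exp (K * T), Real.exp (-(K * T)), Real.exp_pos _, fun x₀ hx₀ => ?_⟩
  have hpl : IsPicardLindelof (fun t x => G x + b t) (⟨0, ⟨le_rfl, hT.le⟩⟩ : Icc 0 T) x₀
      (⟨(B + B') * T, by positivity⟩) 0 ⟨B + B', by positivity⟩ K := by
    refine ⟨fun t _ => (hlip t).lipschitzOnWith, fun x _ => continuousOn_const.add hb, ?_, ?_⟩
    · intro t ht x _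
      exact (norm_add_le _ _).trans (add_le_add (hB x) (hB' t ht))
    · simp only [sub_zero, sub_self, max_eq_left hT.le, NNReal.coe_zero]
      exact le_rfl
  obtain ⟨Y, hY0, hY⟩ := hpl.exists_eq_forall_mem_Icc_hasDerivWithinAt₀
  simp only at hY0
  have hright : ∀ {Z Z' : ℝ → E}, (∀ t ∈ Icc 0 T, HasDerivWithinAt Z (Z' t) (Icc 0 T) t) →
      ∀ t ∈ Ico 0 T, HasDerivWithinAt Z (Z' t) (Ici t) t := by
    intro Z Z' h t ht
    exact (h t ⟨ht.1, ht.2.le⟩).mono_of_mem_nhdsWithin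
      (mem_of_superset (Icc_mem_nhdsGE ht.2) (Icc_subset_Icc_left ht.1))
  have hXG : ∀ t ∈ Icc 0 T, HasDerivWithinAt X (G (X t) + b t) (Icc 0 T) t := by
    intro t ht
    rw [hGF _ ((hM t ht).trans (by linarith))]
    exact hX t ht
  have hdist := dist_le_of_trajectories_ODE hlip (fun t ht => (hY t ht).continuousWithinAt)
    (hright hY) hXc (hright hXG) (δ := ‖x₀ - X 0‖) (by rw [hY0, dist_eq_norm])
  have hbound : ∀ t ∈ Icc 0 T, ‖Y t - X t‖ ≤ Real.exp (K * T) * ‖x₀ - X 0‖ := by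
    intro t ht
    rw [← dist_eq_norm, mul_comm]
    refine (hdist t ht).trans ?_
    gcongr
    linarith [ht.2]
  refine ⟨Y, hY0, fun t ht => ⟨?_, hbound t ht⟩⟩
  have h1 : ‖Y t - X t‖ ≤ 1 := by
    refine (hbound t ht).trans ?_
    calc Real.exp (K * T) * ‖x₀ - X 0‖ ≤ Real.exp (K * T) * Real.exp (-(K * T)) := by gcongr
      _ = 1 := by rw [← Real.exp_add]; simp
  rw [← hGF (Y t)]
  · exact hY t ht
  · calc ‖Y t‖ = ‖X t + (Y t - X t)‖ := by simp
      _ ≤ M + 1 := (norm_add_le _ _).trans (add_le_add (hM t ht) h1)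

/-! ### The damped feedback system and its energy -/

/-- The force in the bond between particles `k` and `k + 1` of the open chain; the bond between
`Pₙ` and `P₁`, whose force the controls can cancel, is removed. -/
def bond (n : ℕ) [NeZero n] (φ : ℝ → ℝ) (q : Fin n → ℝ) (k : Fin n) : ℝ :=
  if k = -1 then 0 else φ (q k - q (k + 1))

/-- The force applied to the end particles by the feedback: `P₁` is attached to the origin by a
spring, `P₁` and `Pₙ` repel each other with potential `l * exp (qₙ - q₁)`, and both are damped. -/
def endForce (n : ℕ) [NeZero n] (l : ℝ) (x : State n) (k : Fin n) : ℝ :=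
  (if k = 0 then -x.1 0 + l * Real.exp (x.1 (-1) - x.1 0) - x.2 0 else 0) +
    (if k = -1 then -(l * Real.exp (x.1 (-1) - x.1 0)) - x.2 (-1) else 0)

/-- The closed-loop vector field: an open chain with the feedback `endForce` at its ends. -/
def damped (n : ℕ) [NeZero n] (Φ : ℝ → ℝ) (l : ℝ) (x : State n) : State n :=
  (x.2, fun k => bond n (deriv Φ) x.1 (k - 1) - bond n (deriv Φ) x.1 k + endForce n l x k)

/-- The energy of the closed loop without damping; it is a Lyapunov function of `damped`. -/
def energy (n : ℕ) [NeZero n] (Φ : ℝ → ℝ) (l : ℝ) (x : State n) : ℝ :=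
  ∑ k, x.2 k ^ 2 / 2 + ∑ k, bond n Φ x.1 k + (x.1 0 ^ 2 / 2 + l * Real.exp (x.1 (-1) - x.1 0))

lemma damped_interior {n : ℕ} [NeZero n] {Φ : ℝ → ℝ} {l : ℝ} (x : State n) {k : Fin n}
    (hk : k ≠ 0) (hk' : k ≠ -1) : (damped n Φ l x).2 k = (drift n Φ x).2 k := by
  simp [damped, drift, bond, endForce, hk, hk']

lemma contDiff_bond {n : ℕ} [NeZero n] {m : WithTop ℕ∞} {φ : ℝ → ℝ} (hφ : ContDiff ℝ m φ)
    (k : Fin n) : ContDiff ℝ m (fun x : State n => bond n φ x.1 k) := by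
  unfold bond
  split_ifs
  · exact contDiff_const
  · exact hφ.comp (by fun_prop)

lemma contDiff_damped {n : ℕ} [NeZero n] {m : WithTop ℕ∞} {Φ : ℝ → ℝ}
    (hφ : ContDiff ℝ m (deriv Φ)) (l : ℝ) : ContDiff ℝ m (damped n Φ l) := by
  unfold damped
  refine contDiff_snd.prodMk (contDiff_pi.2 fun k => ?_)
  refine ((contDiff_bond hφ _).sub (contDiff_bond hφ _)).add ?_
  unfold endForce
  refine ContDiff.add ?_ ?_ <;> split_ifs <;> fun_prop

lemma contDiff_energy {n : ℕ} [NeZero n] {m : WithTop ℕ∞} {Φ : ℝ → ℝ} (hΦ : ContDiff ℝ m Φ)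
    (l : ℝ) : ContDiff ℝ m (energy n Φ l) := by
  unfold energy
  refine ContDiff.add (ContDiff.add ?_ ?_) ?_
  · fun_prop
  · exact ContDiff.sum fun k _ => contDiff_bond hΦ k
  · fun_prop

/-- A trajectory of the damped field is an admissible path; `b` is an additional open-loop force on
the end particles. -/
lemma step_of_solution {n : ℕ} [NeZero n] {Φ : ℝ → ℝ} {l : ℝ} (hφ : ContDiff ℝ 1 (deriv Φ)) {T : ℝ}
    (hT : 0 < T) {b Y : ℝ → State n} (hb : ContinuousOn b (Icc 0 T))
    (hb1 : ∀ t ∈ Icc 0 T, (b t).1 = 0 ∧ ∀ k, k ≠ 0 → k ≠ -1 → (b t).2 k = 0)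
    (hY : ∀ t ∈ Icc 0 T, HasDerivWithinAt Y (damped n Φ l (Y t) + b t) (Icc 0 T) t) :
    Step n Φ (Y 0) (Y T) := by
  have hYc : ContinuousOn Y (Icc 0 T) := fun t ht => (hY t ht).continuousWithinAt
  refine ⟨T, hT, Y, fun t => damped n Φ l (Y t) + b t,
    ⟨((contDiff_damped hφ l).continuous.comp_continuousOn hYc).add hb, ?_⟩, rfl, rfl⟩
  intro t ht
  refine ⟨hY t ht, ?_, ?_⟩
  · simp [damped, (hb1 t ht).1]
  · intro k hk hk'
    rw [← damped_interior (Φ := Φ) (l := l) (Y t) hk hk']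
    simp [(hb1 t ht).2 k hk hk']

/-- The set of starting points of steps into a neighbourhood is a neighbourhood. -/
lemma Step.eventually {n : ℕ} [NeZero n] {Φ : ℝ → ℝ} (hφ : ContDiff ℝ 1 (deriv Φ)) {a b : State n}
    (h : Step n Φ a b) {V : Set (State n)} (hV : V ∈ 𝓝 b) :
    ∀ᶠ a' in 𝓝 a, ∃ b' ∈ V, Step n Φ a' b' := by
  obtain ⟨T, hT, x, x', ⟨hc, hx⟩, rfl, rfl⟩ := h
  have hxc : ContinuousOn x (Icc 0 T) := fun t ht => (hx t ht).1.continuousWithinAt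
  set w : ℝ → State n := fun t => x' t - damped n Φ 0 (x t) with hw
  have hwc : ContinuousOn w (Icc 0 T) :=
    hc.sub ((contDiff_damped hφ 0).continuous.comp_continuousOn hxc)
  obtain ⟨C, δ, hδ, H⟩ := exists_perturbed_solution (contDiff_damped (n := n) hφ 0) hT hwc
    (X := x) (fun t ht => by simpa [hw] using (hx t ht).1)
  have hC : Tendsto (fun a' => C * ‖a' - x 0‖) (𝓝 (x 0)) (𝓝 0) := by
    have : Continuous fun a' => C * ‖a' - x 0‖ := by fun_prop
    simpa using this.tendsto (x 0)
  obtain ⟨ε, hε, hεV⟩ := Metric.mem_nhds_iff.1 hV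
  filter_upwards [Metric.ball_mem_nhds (x 0) hδ, hC.eventually (gt_mem_nhds hε)] with a' ha' ha''
  obtain ⟨Y, hY0, hY⟩ := H a' (by simpa [dist_eq_norm] using ha')
  refine ⟨Y T, hεV ?_, ?_⟩
  · rw [Metric.mem_ball, dist_eq_norm]
    exact (hY T ⟨hT.le, le_rfl⟩).2.trans_lt ha''
  · rw [← hY0]
    refine step_of_solution hφ hT hwc (fun t ht => ⟨?_, fun k hk hk' => ?_⟩) fun t ht => (hY t ht).1
    · simp [hw, damped, (hx t ht).2.1]
    · simp only [hw, Prod.snd_sub, Pi.sub_apply]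
      rw [damped_interior (x t) hk hk', (hx t ht).2.2 k hk hk', sub_self]

lemma sum_shift {n : ℕ} [NeZero n] (f : Fin n → ℝ) : ∑ k, f (k + 1) = ∑ k, f k :=
  Equiv.sum_comp (Equiv.addRight (1 : Fin n)) f

lemma hasDerivWithinAt_energy {n : ℕ} [NeZero n] {Φ : ℝ → ℝ} (hΦ : Differentiable ℝ Φ)
    {l : ℝ} {Y : ℝ → State n} {s : Set ℝ} {t : ℝ}
    (hY : HasDerivWithinAt Y (damped n Φ l (Y t)) s t) :
    HasDerivWithinAt (fun t => energy n Φ l (Y t)) (-(Y t).2 0 ^ 2 - (Y t).2 (-1) ^ 2) s t := by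
  have hq : ∀ k, HasDerivWithinAt (fun t => (Y t).1 k) ((Y t).2 k) s t := fun k =>
    hasDerivWithinAt_pi.1
      ((hasFDerivAt_fst (𝕜 := ℝ) (p := Y t)).comp_hasDerivWithinAt t hY) k
  have hp : ∀ k, HasDerivWithinAt (fun t => (Y t).2 k) ((damped n Φ l (Y t)).2 k) s t := fun k =>
    hasDerivWithinAt_pi.1
      ((hasFDerivAt_snd (𝕜 := ℝ) (p := Y t)).comp_hasDerivWithinAt t hY) k
  have h1 : HasDerivWithinAt (fun t => ∑ k, (Y t).2 k ^ 2 / 2)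
      (∑ k, (Y t).2 k * (damped n Φ l (Y t)).2 k) s t := by
    apply HasDerivWithinAt.fun_sum
    intro k _
    convert! ((hp k).pow 2).div_const 2 using 1
    simp; ring
  have h2 : HasDerivWithinAt (fun t => ∑ k, bond n Φ (Y t).1 k)
      (∑ k, bond n (deriv Φ) (Y t).1 k * ((Y t).2 k - (Y t).2 (k + 1))) s t := by
    apply HasDerivWithinAt.fun_sum
    intro k _
    by_cases hk : k = -1
    · simpa [bond, hk] using hasDerivWithinAt_const t s (0 : ℝ)
    · simp only [bond, hk, if_false]
      exact (hΦ _).hasDerivAt.comp_hasDerivWithinAt t ((hq k).sub (hq (k + 1)))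
  have h3 : HasDerivWithinAt (fun t => (Y t).1 0 ^ 2 / 2 + l * Real.exp ((Y t).1 (-1) - (Y t).1 0))
      ((Y t).1 0 * (Y t).2 0 + l * Real.exp ((Y t).1 (-1) - (Y t).1 0) *
        ((Y t).2 (-1) - (Y t).2 0)) s t := by
    convert! (((hq 0).pow 2).div_const 2).add (((hq (-1)).sub (hq 0)).exp.const_mul l) using 1
    simp; ring
  convert! (h1.add h2).add h3 using 1
  -- Summation by parts: the internal forces do not contribute to the energy balance.
  have h4 : ∑ k, (Y t).2 k * bond n (deriv Φ) (Y t).1 (k - 1) =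
      ∑ k, (Y t).2 (k + 1) * bond n (deriv Φ) (Y t).1 k := by
    rw [← sum_shift]
    simp
  have h5 : ∑ k, (Y t).2 k * endForce n l (Y t) k =
      (Y t).2 0 * (-(Y t).1 0 + l * Real.exp ((Y t).1 (-1) - (Y t).1 0) - (Y t).2 0) +
      (Y t).2 (-1) * (-(l * Real.exp ((Y t).1 (-1) - (Y t).1 0)) - (Y t).2 (-1)) := by
    simp [endForce, mul_add, Finset.sum_add_distrib]
  simp only [damped, mul_add, mul_sub, Finset.sum_add_distrib, Finset.sum_sub_distrib, h4, h5]
  simp only [mul_comm (bond n (deriv Φ) (Y t).1 _)]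
  ring

/-- Sublevel sets of the energy are bounded: the lower bound on `Φ` bounds each summand; the growth
of `Φ` at `+∞` bounds each `q k - q (k + 1)` above, and the repulsion of the ends together with
the spring at `P₁` bounds the two ends. -/
lemma isCompact_energy_le {n : ℕ} [NeZero n] (hn : 3 ≤ n) {Φ : ℝ → ℝ} (hΦ : Continuous Φ)
    (hbdd : BddBelow (range Φ)) (htop : Tendsto Φ atTop atTop) {l : ℝ} (hl : 0 < l) (C : ℝ) :
    IsCompact {x : State n | energy n Φ l x ≤ C} := by
  obtain ⟨m₀, hm₀⟩ := hbdd
  obtain ⟨m, hm0, hm⟩ : ∃ m ≤ 0, ∀ y, m ≤ Φ y :=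
    ⟨min m₀ 0, min_le_right _ _, fun y => (min_le_left _ _).trans (hm₀ (mem_range_self y))⟩
  have hbond : ∀ q k, m ≤ bond n Φ q k := by
    intro q k
    unfold bond
    split_ifs
    exacts [hm0, hm _]
  set C' : ℝ := |C - n * m - m| + 1 with hC'
  have hC'1 : 1 ≤ C' := by simp [hC']
  obtain ⟨y₀, hy₀⟩ : ∃ y₀, ∀ y ≥ y₀, C' < Φ y := by
    simpa using (htop.eventually_gt_atTop C').exists_forall_of_atTop
  set y₁ := max y₀ 0 with hy₁
  have hy₁0 : 0 ≤ y₁ := le_max_right _ _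
  set z : ℝ := |Real.log (C' / l)| with hz
  set R : ℝ := 2 * C' + z + n * y₁ with hR
  have hnn : (0 : ℝ) ≤ n * y₁ := by positivity
  have hz0 : 0 ≤ z := abs_nonneg _
  refine Metric.isCompact_of_isClosed_isBounded ?_ ?_
  · have : Continuous (energy n Φ l) :=
      contDiff_zero.1 (contDiff_energy (contDiff_zero.2 hΦ) l)
    exact isClosed_le this continuous_const
  rw [isBounded_iff_forall_norm_le]
  refine ⟨R, fun x hx => ?_⟩
  have hx : energy n Φ l x ≤ C := hx
  unfold energy at hx
  have hs1 : 0 ≤ ∑ k, x.2 k ^ 2 / 2 := Finset.sum_nonneg fun k _ => by positivity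
  have hs2 : ∀ k, bond n Φ x.1 k + n * m ≤ ∑ k, bond n Φ x.1 k := by
    intro k
    have h : bond n Φ x.1 k - m ≤ ∑ k, (bond n Φ x.1 k - m) :=
      Finset.single_le_sum (f := fun k => bond n Φ x.1 k - m)
        (fun k _ => sub_nonneg.2 (hbond _ _)) (Finset.mem_univ k)
    rw [Finset.sum_sub_distrib] at h
    simp at h
    linarith
  have hs3 : 0 ≤ x.1 0 ^ 2 / 2 := by positivity
  have hs4 : 0 < l * Real.exp (x.1 (-1) - x.1 0) := by positivity
  have habs := le_abs_self (C - n * m - m)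
  have hp : ∀ k, |x.2 k| ≤ R := by
    intro k
    have h : x.2 k ^ 2 / 2 ≤ ∑ k, x.2 k ^ 2 / 2 :=
      Finset.single_le_sum (f := fun k => x.2 k ^ 2 / 2) (fun k _ => by positivity)
        (Finset.mem_univ k)
    have h2 : x.2 k ^ 2 ≤ 2 * C' := by linarith [hs2 0, hbond x.1 0]
    have h3 : |x.2 k| ≤ 2 * C' := by
      apply abs_le_of_sq_le_sq _ (by linarith)
      nlinarith
    linarith
  have hq0 : |x.1 0| ≤ 2 * C' := by
    have h2 : x.1 0 ^ 2 ≤ 2 * C' := by linarith [hs2 0, hbond x.1 0]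
    apply abs_le_of_sq_le_sq _ (by linarith)
    nlinarith
  have hend : x.1 (-1) - x.1 0 ≤ z := by
    have h2 : l * Real.exp (x.1 (-1) - x.1 0) ≤ C' := by linarith [hs2 0, hbond x.1 0]
    have h3 : Real.exp (x.1 (-1) - x.1 0) ≤ C' / l := by
      rw [le_div_iff₀ hl]; linarith
    have := (Real.le_log_iff_exp_le (by positivity)).2 h3
    exact this.trans (le_abs_self _)
  have hy : ∀ k, k ≠ -1 → x.1 k - x.1 (k + 1) ≤ y₁ := by
    intro k hk
    by_contra! hcon
    have h1 := hy₀ (x.1 k - x.1 (k + 1)) ((le_max_left _ _).trans hcon.le)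
    have h2 := hs2 k
    have h3 : bond n Φ x.1 k = Φ (x.1 k - x.1 (k + 1)) := by simp [bond, hk]
    linarith
  have hlow : ∀ k : Fin n, x.1 0 - k.val * y₁ ≤ x.1 k := by
    refine fin_chain_induction n hn (P := fun k => x.1 0 - k.val * y₁ ≤ x.1 k) ?_ ?_
    · simp
    · intro k hk ih
      rw [val_succ_of_ne n hn k hk]
      push_cast
      linarith [hy k hk]
  have hup : ∀ k : Fin n, ∀ j : Fin n, k.val ≤ j.val → x.1 k ≤ x.1 j + (j.val - k.val) * y₁ := by
    intro k
    refine fin_chain_induction n hn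
      (P := fun j => k.val ≤ j.val → x.1 k ≤ x.1 j + (j.val - k.val) * y₁) ?_ ?_
    · intro h
      have : k = 0 := Fin.ext (by simpa using h)
      simp [this]
    · intro j hj ih h
      rcases h.eq_or_lt with h | h
      · rw [Fin.ext h]; simp
      · rw [val_succ_of_ne n hn j hj] at h ⊢
        push_cast
        linarith [hy j hj, ih (by omega)]
  have hq : ∀ k, |x.1 k| ≤ R := by
    intro k
    have hkn : (k.val : ℝ) * y₁ ≤ n * y₁ := by
      gcongr
      exact k.isLt.le
    rw [abs_le] at hq0 ⊢
    constructor
    · linarith [hlow k]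
    · have h1 := hup k (-1) (by rw [val_neg_one n hn]; have := k.isLt; omega)
      have h2 : (((-1 : Fin n).val : ℝ) - k.val) * y₁ ≤ n * y₁ := by
        gcongr
        have h3 : ((-1 : Fin n).val : ℝ) ≤ n := by exact_mod_cast (-1 : Fin n).isLt.le
        linarith [(Nat.cast_nonneg k.val : (0:ℝ) ≤ k.val)]
      linarith
  have hR0 : 0 ≤ R := (abs_nonneg _).trans (hp 0)
  rw [Prod.norm_def]
  exact max_le ((pi_norm_le_iff_of_nonneg hR0).2 hq) ((pi_norm_le_iff_of_nonneg hR0).2 hp)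

/-! ### Level sets of the interaction force -/

lemma countable_zeros {f : ℝ → ℝ} (hf : ∀ x, AnalyticAt ℝ f x) {x₀ : ℝ} (hx₀ : f x₀ ≠ 0) :
    {x | f x = 0}.Countable := by
  have h := AnalyticOnNhd.preimage_zero_mem_codiscrete (f := f) (x := x₀) (fun x _ => hf x) hx₀
  rw [mem_codiscrete'] at h
  have h2 : {x | f x = 0} = (f ⁻¹' {0}ᶜ)ᶜ := by ext; simp
  rw [h2]
  have := h.2.to_subtype
  exact (TopologicalSpace.separableSpace_iff_countable (α := ↥((f ⁻¹' {0}ᶜ)ᶜ))).1 inferInstance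

lemma Admissible.exists_deriv_ne {Φ : ℝ → ℝ} (h : Admissible Φ) (c : ℝ) :
    ∃ x, deriv Φ x ≠ c := by
  by_contra! hc
  obtain ⟨ha, ⟨m, hm⟩, ht⟩ := h
  have hd : Differentiable ℝ Φ := fun x => (ha x).differentiableAt
  have hlin : ∀ x, Φ x = Φ 0 + c * x := by
    intro x
    have := is_const_of_deriv_eq_zero (f := fun x => Φ x - c * x) (by fun_prop)
      (fun x => by
        have := ((hd x).hasDerivAt.sub ((hasDerivAt_id x).const_mul c)).deriv
        simp only [hc x, mul_one, sub_self] at this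
        exact this) x 0
    simp only [mul_zero, sub_zero] at this
    linarith
  have hm' : ∀ x, m ≤ Φ x := fun x => hm (mem_range_self x)
  rcases lt_trichotomy c 0 with h0 | h0 | h0
  · obtain ⟨x, hx⟩ := ((tendsto_atTop.1 ht (Φ 0 + 1)).and (eventually_ge_atTop 0)).exists
    rw [hlin x] at hx
    nlinarith [hx.1, hx.2]
  · obtain ⟨x, hx⟩ := (tendsto_atTop.1 ht (Φ 0 + 1)).exists
    rw [hlin x, h0] at hx
    linarith
  · have := hm' ((m - Φ 0 - 1) / c)
    rw [hlin, mul_div_cancel₀ _ h0.ne'] at this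
    linarith

lemma Admissible.countable_level {Φ : ℝ → ℝ} (h : Admissible Φ) (c : ℝ) :
    {y | deriv Φ y = c}.Countable := by
  obtain ⟨x, hx⟩ := h.exists_deriv_ne c
  have := countable_zeros (f := fun y => deriv Φ y - c)
    (fun x => (h.1 x).deriv.sub analyticAt_const) (sub_ne_zero.2 hx)
  simpa [sub_eq_zero] using this

lemma Admissible.countable_critical {Φ : ℝ → ℝ} (h : Admissible Φ) :
    {y | deriv (deriv Φ) y = 0}.Countable := by
  have : ∃ x, deriv (deriv Φ) x ≠ 0 := by
    by_contra! hc
    obtain ⟨x, hx⟩ := h.exists_deriv_ne (deriv Φ 0)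
    exact hx (is_const_of_deriv_eq_zero (fun x => (h.1 x).deriv.differentiableAt) hc x 0)
  obtain ⟨x, hx⟩ := this
  exact countable_zeros (fun x => (h.1 x).deriv.deriv) hx

lemma Admissible.contDiff {Φ : ℝ → ℝ} (h : Admissible Φ) {m : WithTop ℕ∞} : ContDiff ℝ m Φ :=
  contDiff_iff_contDiffAt.2 fun x => (h.1 x).contDiffAt

lemma Admissible.contDiff_deriv {Φ : ℝ → ℝ} (h : Admissible Φ) {m : WithTop ℕ∞} :
    ContDiff ℝ m (deriv Φ) :=
  contDiff_iff_contDiffAt.2 fun x => (h.1 x).deriv.contDiffAt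

/-- A continuous function whose values stay in a level set of `Φ'` is constant, level sets of `Φ'`
being countable. -/
lemma Admissible.eq_of_level {Φ : ℝ → ℝ} (h : Admissible Φ) {c : ℝ} {y : ℝ → ℝ} {I : Set ℝ}
    (hI : IsPreconnected I) (hy : ContinuousOn y I) (hc : ∀ t ∈ I, deriv Φ (y t) = c)
    {s t : ℝ} (hs : s ∈ I) (ht : t ∈ I) : y s = y t := by
  refine (h.countable_level c).isTotallyDisconnected (y '' I) ?_ (hI.image y hy)
    (mem_image_of_mem y hs) (mem_image_of_mem y ht)
  rintro _ ⟨r, hr, rfl⟩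
  exact hc r hr

lemma sum_gap {n : ℕ} [NeZero n] (q : Fin n → ℝ) :
    ∑ k, (if k = -1 then 0 else q k - q (k + 1)) = q 0 - q (-1) := by
  have h1 : ∀ k : Fin n, (if k = -1 then 0 else q k - q (k + 1)) =
      (q k - q (k + 1)) - (if k = -1 then q (-1) - q 0 else 0) := by
    intro k
    split_ifs with hk
    · subst hk; simp
    · simp
  rw [Finset.sum_congr rfl fun k _ => h1 k, Finset.sum_sub_distrib, Finset.sum_sub_distrib,
    sum_shift q]
  simp

/-- For all but countably many `l`, the closed loop has no equilibrium with a degenerate bond. -/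
lemma Admissible.exists_regular {n : ℕ} [NeZero n] {Φ : ℝ → ℝ} (h : Admissible Φ) :
    ∃ l : ℝ, 0 < l ∧ ∀ q : Fin n → ℝ,
      (∀ k, k ≠ -1 → deriv Φ (q k - q (k + 1)) = l * Real.exp (q (-1) - q 0)) →
      ∀ k, k ≠ -1 → deriv (deriv Φ) (q k - q (k + 1)) ≠ 0 := by
  set B : Set ℝ := ⋃ z ∈ {z | deriv (deriv Φ) z = 0},
    (fun y : Fin n → ℝ => deriv Φ z * Real.exp (∑ k, y k)) ''
      (Set.univ.pi fun _ => {y | deriv Φ y = deriv Φ z} ∪ {0}) with hB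
  have hBc : B.Countable := by
    refine h.countable_critical.biUnion fun z _ => Countable.image ?_ _
    exact Set.countable_univ_pi fun _ => (h.countable_level _).union (countable_singleton 0)
  obtain ⟨l, hl, hlB⟩ : ∃ l ∈ Ioi (0 : ℝ), l ∉ B := by
    by_contra! hc
    have h1 : (Ioi (0 : ℝ)).Countable := hBc.mono hc
    rw [← Cardinal.le_aleph0_iff_set_countable, Cardinal.mk_Ioi_real] at h1
    exact absurd h1 (not_le.2 Cardinal.aleph0_lt_continuum)
  refine ⟨l, hl, fun q hq k hk hz => hlB ?_⟩
  refine mem_biUnion (x := q k - q (k + 1)) hz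
    ⟨fun j => if j = -1 then 0 else q j - q (j + 1), fun j _ => ?_, ?_⟩
  · by_cases hj : j = -1
    · simp [hj]
    · left
      simp only [hj, if_false, mem_ofPred_eq]
      rw [hq j hj, hq k hk]
  · simp only [sum_gap, hq k hk]
    rw [mul_assoc, ← Real.exp_add]
    simp

/-! ### Approximate convergence to an equilibrium -/

/-- A rest point of the closed loop at which every bond is a local diffeomorphism. -/
structure RegularEq (n : ℕ) [NeZero n] (Φ : ℝ → ℝ) (l : ℝ) (x : State n) : Prop where
  rest : damped n Φ l x = 0
  regular : ∀ k, k ≠ -1 → deriv (deriv Φ) (x.1 k - x.1 (k + 1)) ≠ 0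

/-- Zero dissipation along an arc of the closed loop forces rest: the end particles stand still,
so the force in the first bond is constant, so the second particle stands still, and so on. -/
lemma rest_of_no_dissipation {n : ℕ} [NeZero n] (hn : 3 ≤ n) {Φ : ℝ → ℝ} (h : Admissible Φ) {l : ℝ}
    {X : ℝ → State n} {a b : ℝ}
    (hX : ∀ t ∈ Ioo a b, HasDerivAt X (damped n Φ l (X t)) t)
    (h0 : ∀ t ∈ Ioo a b, (X t).2 0 = 0) (h1 : ∀ t ∈ Ioo a b, (X t).2 (-1) = 0)
    {t : ℝ} (ht : t ∈ Ioo a b) : damped n Φ l (X t) = 0 ∧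
      ∀ k, k ≠ -1 → deriv Φ ((X t).1 k - (X t).1 (k + 1)) =
        l * Real.exp ((X t).1 (-1) - (X t).1 0) := by
  have hq : ∀ k, ∀ s ∈ Ioo a b, HasDerivAt (fun t => (X t).1 k) ((X s).2 k) s := fun k s hs =>
    hasDerivAt_pi.1 ((hasFDerivAt_fst (𝕜 := ℝ) (p := X s)).comp_hasDerivAt s (hX s hs)) k
  have hp : ∀ k, ∀ s ∈ Ioo a b, HasDerivAt (fun t => (X t).2 k) ((damped n Φ l (X s)).2 k) s :=
    fun k s hs =>
    hasDerivAt_pi.1 ((hasFDerivAt_snd (𝕜 := ℝ) (p := X s)).comp_hasDerivAt s (hX s hs)) k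
  have hpq : ∀ k, (∀ s ∈ Ioo a b, (X s).1 k = (X t).1 k) → ∀ s ∈ Ioo a b, (X s).2 k = 0 := by
    intro k hk s hs
    refine (hq k s hs).unique ?_
    refine (hasDerivAt_const s ((X t).1 k)).congr_of_eventuallyEq ?_
    filter_upwards [isOpen_Ioo.mem_nhds hs] with r hr using hk r hr
  have hpp : ∀ k, (∀ s ∈ Ioo a b, (X s).2 k = 0) → ∀ s ∈ Ioo a b, (damped n Φ l (X s)).2 k = 0 := by
    intro k hk s hs
    refine (hp k s hs).unique ?_
    refine (hasDerivAt_const s (0 : ℝ)).congr_of_eventuallyEq ?_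
    filter_upwards [isOpen_Ioo.mem_nhds hs] with r hr using hk r hr
  have hqc : ∀ k, (∀ s ∈ Ioo a b, (X s).2 k = 0) → ∀ s ∈ Ioo a b, (X s).1 k = (X t).1 k := by
    intro k hk s hs
    refine (convex_Ioo a b).is_const_of_fderivWithin_eq_zero (𝕜 := ℝ) (f := fun t => (X t).1 k)
      (fun s hs => (hq k s hs).differentiableAt.differentiableWithinAt) ?_ hs ht
    intro s hs
    have := (hq k s hs).hasDerivWithinAt (s := Ioo a b)
    rw [hk s hs] at this
    rw [this.hasFDerivWithinAt.fderivWithin (isOpen_Ioo.uniqueDiffWithinAt hs)]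
    ext; simp
  have hz : (0 : Fin n) ≠ -1 := zero_ne_neg_one n hn
  have key := fin_chain_induction n hn
    (P := fun k => (∀ s ∈ Ioo a b, (X s).1 k = (X t).1 k) ∧
      (k ≠ -1 → ∀ s ∈ Ioo a b, bond n (deriv Φ) (X s).1 k = bond n (deriv Φ) (X t).1 0))
    ⟨hqc 0 h0, fun _ s hs => by
      have e1 := hpp 0 h0 s hs
      have e2 := hpp 0 h0 t ht
      have c0 := hqc 0 h0 s hs
      have c1 := hqc (-1) h1 s hs
      simp only [damped, endForce, hz, if_true, if_false, zero_sub, h0 s hs, h0 t ht, c0, c1]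
        at e1 e2
      simp only [bond, if_true] at e1 e2 ⊢
      simp only [hz, if_false] at e1 e2 ⊢
      linarith⟩ ?_
  · have hv : ∀ k, ∀ s ∈ Ioo a b, (X s).2 k = 0 := fun k => hpq k (key k).1
    have hd : damped n Φ l (X t) = 0 := by
      refine Prod.ext ?_ ?_
      · ext k; exact hv k t ht
      · ext k; exact hpp k (hv k) t ht
    refine ⟨hd, fun k hk => ?_⟩
    have e := congrFun (congrArg Prod.snd hd) (-1)
    have hk2 : (-1 - 1 : Fin n) ≠ -1 := pred_ne_of_ne n (-1) hz.symm
    have e1 := (key (-1 - 1)).2 hk2 t ht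
    have e2 := (key k).2 hk t ht
    simp only [damped, endForce, hz.symm, if_false, if_true, hv (-1) t ht, Prod.snd_zero,
      Pi.zero_apply] at e
    rw [e1] at e
    simp only [bond, if_true] at e e2
    rw [if_neg hk] at e2
    rw [e2]
    linarith
  · rintro k hk ⟨hk1, hk2⟩
    have hk2 := hk2 hk
    have hgap : ∀ s ∈ Ioo a b, (X s).1 k - (X s).1 (k + 1) = (X t).1 k - (X t).1 (k + 1) := by
      intro s hs
      refine h.eq_of_level (c := bond n (deriv Φ) (X t).1 0) isPreconnected_Ioo
        (y := fun s => (X s).1 k - (X s).1 (k + 1))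
        (fun s hs => ((hq k s hs).sub (hq (k+1) s hs)).continuousAt.continuousWithinAt)
        (fun s hs => ?_) hs ht
      have := hk2 s hs
      simpa [bond, hk] using this
    have hk3 : ∀ s ∈ Ioo a b, (X s).1 (k + 1) = (X t).1 (k + 1) := fun s hs => by
      linarith [hgap s hs, hk1 s hs]
    refine ⟨hk3, fun hk' s hs => ?_⟩
    have e := hpp (k + 1) (hpq (k + 1) hk3) s hs
    simp only [damped, endForce, hk', succ_ne_zero_of_ne n k hk, if_false, add_zero,
      add_sub_cancel_right] at e
    rw [hk2 s hs] at e
    linarith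

/-- LaSalle's principle in a static form: the equilibrium is found on the closed-loop trajectory
starting at a point of least energy in the closure of the reachable set. -/
lemma exists_closure_equilibrium {n : ℕ} [NeZero n] (hn : 3 ≤ n) {Φ : ℝ → ℝ} (h : Admissible Φ)
    {l : ℝ} (hl : 0 < l) (x : State n) :
    ∃ y ∈ closure {y | Reach n Φ x y}, damped n Φ l y = 0 ∧
      ∀ k, k ≠ -1 → deriv Φ (y.1 k - y.1 (k + 1)) = l * Real.exp (y.1 (-1) - y.1 0) := by
  set R : Set (State n) := closure {y | Reach n Φ x y} with hR
  have hcE : Continuous (energy n Φ l) := (contDiff_energy (m := 1) h.contDiff l).continuous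
  have hS : IsCompact (R ∩ {y | energy n Φ l y ≤ energy n Φ l x}) :=
    (isCompact_energy_le hn (h.contDiff (m := 1)).continuous h.2.1 h.2.2 hl _).inter_left
      isClosed_closure
  obtain ⟨y, ⟨hyR, hyE⟩, hmin⟩ := hS.exists_isMinOn
    ⟨x, subset_closure Relation.ReflTransGen.refl, (le_refl (energy n Φ l x) :)⟩ hcE.continuousOn
  have hF : ContDiff ℝ 1 (damped n Φ l) := contDiff_damped h.contDiff_deriv l
  obtain ⟨X, hX0, ε, hε, hX⟩ :=
    hF.contDiffAt.exists_forall_mem_closedBall_exists_eq_forall_mem_Ioo_hasDerivAt₀ (x₀ := y) 0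
  simp only [zero_sub, zero_add] at hX
  have hXR : ∀ t ∈ Ioo 0 ε, X t ∈ R := by
    intro t ht
    have hXt : ∀ s ∈ Icc 0 t, HasDerivWithinAt X (damped n Φ l (X s) + (0 : State n)) (Icc 0 t) s :=
      fun s hs => by
        rw [add_zero]
        exact (hX s ⟨by linarith [hs.1], hs.2.trans_lt ht.2⟩).hasDerivWithinAt
    obtain ⟨C, δ, hδ, H⟩ := exists_perturbed_solution hF ht.1 (b := fun _ => 0)
      continuousOn_const hXt
    rw [hX0] at H
    rw [hR, mem_closure_iff_seq_limit] at hyR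
    obtain ⟨z, hz, hzy⟩ := hyR
    have hzn : Tendsto (fun i => ‖z i - y‖) atTop (𝓝 0) := by
      simpa using (tendsto_iff_norm_sub_tendsto_zero.1 hzy)
    have hev : ∀ᶠ i in atTop, ∃ w, Reach n Φ x w ∧ ‖w - X t‖ ≤ C * ‖z i - y‖ := by
      filter_upwards [hzn.eventually_lt_const hδ] with i hi
      obtain ⟨Y, hY0, hY⟩ := H (z i) hi
      refine ⟨Y t, ?_, (hY t ⟨ht.1.le, le_rfl⟩).2⟩
      refine (hz i).tail ?_
      rw [← hY0]
      exact step_of_solution (l := l) (b := fun _ => 0) h.contDiff_deriv ht.1 continuousOn_const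
        (fun _ _ => ⟨rfl, fun _ _ _ => rfl⟩) fun s hs => (hY s hs).1
    rw [hR, Metric.mem_closure_iff]
    intro η hη
    have h2 : Tendsto (fun i => C * ‖z i - y‖) atTop (𝓝 0) := by simpa using hzn.const_mul C
    obtain ⟨i, ⟨w, hw, hwX⟩, hi⟩ := (hev.and (h2.eventually_lt_const hη)).exists
    exact ⟨w, hw, by rw [dist_comm, dist_eq_norm]; exact hwX.trans_lt hi⟩
  have hE : ∀ t ∈ Ioo (-ε) ε, HasDerivAt (fun t => energy n Φ l (X t))
      (-(X t).2 0 ^ 2 - (X t).2 (-1) ^ 2) t := fun t ht => by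
    have := hasDerivWithinAt_energy (Φ := Φ) (l := l) (Y := X) (s := univ)
      (h.contDiff.differentiable (n := 1) (by simp)) (hX t ht).hasDerivWithinAt
    simpa using this
  have hanti : AntitoneOn (fun t => energy n Φ l (X t)) (Ioo (-ε) ε) := by
    refine antitoneOn_of_deriv_nonpos (convex_Ioo _ _)
      (fun t ht => (hE t ht).continuousAt.continuousWithinAt) ?_ ?_ <;> rw [interior_Ioo]
    · exact fun t ht => (hE t ht).differentiableAt.differentiableWithinAt
    · intro t ht
      rw [(hE t ht).deriv]
      nlinarith [sq_nonneg ((X t).2 0), sq_nonneg ((X t).2 (-1))]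
  have hconst : ∀ t ∈ Ioo 0 ε, energy n Φ l (X t) = energy n Φ l y := by
    intro t ht
    have h1 : energy n Φ l (X t) ≤ energy n Φ l y := by
      have := hanti (a := 0) (b := t) ⟨by linarith, hε⟩ ⟨by linarith [ht.1], ht.2⟩ ht.1.le
      simpa only [hX0] using this
    refine le_antisymm h1 (isMinOn_iff.1 hmin _ ⟨hXR t ht, h1.trans hyE⟩)
  have hdis : ∀ t ∈ Ioo 0 ε, (X t).2 0 = 0 ∧ (X t).2 (-1) = 0 := by
    intro t ht
    have h2 : HasDerivAt (fun t => energy n Φ l (X t)) 0 t := by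
      refine (hasDerivAt_const t (energy n Φ l y)).congr_of_eventuallyEq ?_
      filter_upwards [isOpen_Ioo.mem_nhds ht] with r hr using hconst r hr
    have h3 := (hE t ⟨by linarith [ht.1], ht.2⟩).unique h2
    constructor <;> nlinarith [sq_nonneg ((X t).2 0), sq_nonneg ((X t).2 (-1))]
  have hmid : ε / 2 ∈ Ioo 0 ε := ⟨by linarith, by linarith⟩
  exact ⟨X (ε / 2), hXR _ hmid, rest_of_no_dissipation hn h
    (fun t ht => hX t ⟨by linarith [ht.1], ht.2⟩) (fun t ht => (hdis t ht).1)
    (fun t ht => (hdis t ht).2) hmid⟩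

/-- From every state the system can be steered arbitrarily close to a regular equilibrium. -/
lemma Admissible.exists_regularEq {n : ℕ} [NeZero n] (hn : 3 ≤ n) {Φ : ℝ → ℝ} (h : Admissible Φ) :
    ∃ l : ℝ, ∀ x : State n, ∃ y ∈ closure {y | Reach n Φ x y}, RegularEq n Φ l y := by
  obtain ⟨l, hl, hreg⟩ := h.exists_regular (n := n)
  refine ⟨l, fun x => ?_⟩
  obtain ⟨y, hy, hy1, hy2⟩ := exists_closure_equilibrium hn h hl x
  exact ⟨y, hy, hy1, hreg y.1 hy2⟩

/-! ### Total derivatives along a vector field -/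

/-- The total time derivative of a time-dependent function `G` along the vector field `f`. -/
def lieD {E : Type*} [NormedAddCommGroup E] [NormedSpace ℝ E] (f : E → E) (G : E × ℝ → ℝ) :
    E × ℝ → ℝ :=
  fun e => fderiv ℝ G e (f e.1, 1)

/-- `G` is smooth near the line `{a} × ℝ` and takes the constant value `c` on it. -/
def SmoothAlong {E : Type*} [NormedAddCommGroup E] [NormedSpace ℝ E] (a : E) (G : E × ℝ → ℝ)
    (c : ℝ) : Prop :=
  ∀ t, ContDiffAt ℝ ∞ G (a, t) ∧ G (a, t) = c

section TotalDerivative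

variable {E : Type*} [NormedAddCommGroup E] [NormedSpace ℝ E] {f : E → E}

lemma lieD_contDiffAt {m k : WithTop ℕ∞} (hf : ContDiff ℝ m f) {G : E × ℝ → ℝ} {e : E × ℝ}
    (hG : ContDiffAt ℝ k G e) (hk : m + 1 ≤ k) : ContDiffAt ℝ m (lieD f G) e :=
  (hG.fderiv_right hk).clm_apply
    ((hf.contDiffAt.comp e contDiffAt_fst).prodMk contDiffAt_const)

lemma lieD_congr {G H : E × ℝ → ℝ} {e : E × ℝ} (h : G =ᶠ[𝓝 e] H) :
    lieD f G =ᶠ[𝓝 e] lieD f H :=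
  (h.fderiv (𝕜 := ℝ)).mono fun x hx => by simp only [lieD, hx]

lemma lieD_const (c : ℝ) : lieD f (fun _ => c) = fun _ => 0 := by
  funext e
  simp [lieD]

lemma lieD_linear (A : E →L[ℝ] ℝ) : lieD f (fun e => A e.1) = fun e => A (f e.1) := by
  funext e
  have : HasFDerivAt (fun e : E × ℝ => A e.1) (A.comp (ContinuousLinearMap.fst ℝ E ℝ)) e :=
    (A.comp (ContinuousLinearMap.fst ℝ E ℝ)).hasFDerivAt
  simp [lieD, this.fderiv]

lemma hasDerivWithinAt_lieD {G : E × ℝ → ℝ} {x : ℝ → E} {s : Set ℝ} {t : ℝ}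
    (hG : DifferentiableAt ℝ G (x t, t)) (hx : HasDerivWithinAt x (f (x t)) s t) :
    HasDerivWithinAt (fun t => G (x t, t)) (lieD f G (x t, t)) s t :=
  hG.hasFDerivAt.comp_hasDerivWithinAt (f := fun t => (x t, t)) t (hx.prodMk (hasDerivWithinAt_id t s))

lemma SmoothAlong.lieD {a : E} (hf : ContDiff ℝ ∞ f) (ha : f a = 0) {G : E × ℝ → ℝ} {c : ℝ}
    (hG : SmoothAlong a G c) : SmoothAlong a (lieD f G) 0 := by
  intro t
  refine ⟨lieD_contDiffAt hf (hG t).1 (by simp), ?_⟩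
  have h1 : HasDerivWithinAt (fun s => G (a, s)) (_root_.lieD f G (a, t)) univ t :=
    hasDerivWithinAt_lieD (f := f) (x := fun _ => a)
      ((hG t).1.differentiableAt (by simp)) (by rw [ha]; exact hasDerivWithinAt_const t _ a)
  have h2 : (fun s => G (a, s)) = fun _ => c := funext fun s => (hG s).2
  rw [h2, hasDerivWithinAt_univ] at h1
  exact h1.unique (hasDerivAt_const t c)

lemma SmoothAlong.sub {a : E} {G H : E × ℝ → ℝ} {c d : ℝ} (hG : SmoothAlong a G c)
    (hH : SmoothAlong a H d) : SmoothAlong a (fun e => G e - H e) (c - d) := fun t =>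
  ⟨(hG t).1.sub (hH t).1, by simp only [(hG t).2, (hH t).2]⟩

lemma SmoothAlong.comp {a : E} {G : E × ℝ → ℝ} {c : ℝ} {g : ℝ → ℝ} (hG : SmoothAlong a G c)
    (hg : ContDiffAt ℝ ∞ g c) : SmoothAlong a (fun e => g (G e)) (g c) := fun t => by
  refine ⟨ContDiffAt.comp (a, t) ?_ (hG t).1, by simp only [(hG t).2]⟩
  rw [(hG t).2]
  exact hg

/-- The positions of the particles expressed through those of the first two: the equation of motion
of particle `k + 1` is solved for the position of particle `k + 2`, the maps `ψ` being local
inverses of `φ`. -/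
def chainFn (f : E → E) (φ : ℝ → ℝ) (ψ : ℕ → ℝ → ℝ) (G₀ G₁ : E × ℝ → ℝ) : ℕ → E × ℝ → ℝ
  | 0 => G₀
  | 1 => G₁
  | k + 2 => fun e => chainFn f φ ψ G₀ G₁ (k + 1) e -
      ψ (k + 1) (φ (chainFn f φ ψ G₀ G₁ k e - chainFn f φ ψ G₀ G₁ (k + 1) e) -
        lieD f (lieD f (chainFn f φ ψ G₀ G₁ (k + 1))) e)

variable {φ : ℝ → ℝ} {ψ : ℕ → ℝ → ℝ} {G₀ G₁ : E × ℝ → ℝ} {a : E} {Q : ℕ → ℝ} {N : ℕ}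

/-- The expression to which a local inverse `ψ (k + 1)` is applied in `chainFn` takes the
equilibrium force as its value on the line. -/
lemma chain_arg (hf : ContDiff ℝ ∞ f) (ha : f a = 0) (hφ : ContDiff ℝ ∞ φ)
    {G H : E × ℝ → ℝ} {c d : ℝ} (hG : SmoothAlong a G c) (hH : SmoothAlong a H d) :
    SmoothAlong a (fun e => φ (G e - H e) - lieD f (lieD f H) e) (φ (c - d)) := by
  simpa using ((hG.sub hH).comp hφ.contDiffAt).sub ((hH.lieD hf ha).lieD hf ha)

lemma chain_smooth (hf : ContDiff ℝ ∞ f) (ha : f a = 0) (hφ : ContDiff ℝ ∞ φ)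
    (h0 : SmoothAlong a G₀ (Q 0)) (h1 : SmoothAlong a G₁ (Q 1))
    (hQ : ∀ k, k + 1 < N → φ (Q k - Q (k + 1)) = φ (Q (k + 1) - Q (k + 2)))
    (hψ : ∀ k, k < N → ContDiffAt ℝ ∞ (ψ k) (φ (Q k - Q (k + 1))))
    (hψ' : ∀ k, k < N → ψ k (φ (Q k - Q (k + 1))) = Q k - Q (k + 1)) :
    ∀ k, k + 1 ≤ N → SmoothAlong a (chainFn f φ ψ G₀ G₁ k) (Q k) ∧
      SmoothAlong a (chainFn f φ ψ G₀ G₁ (k + 1)) (Q (k + 1)) := by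
  intro k
  induction k with
  | zero => exact fun _ => ⟨h0, h1⟩
  | succ k ih =>
    intro hk
    obtain ⟨i1, i2⟩ := ih (by omega)
    refine ⟨i2, ?_⟩
    have h3 := chain_arg hf ha hφ i1 i2
    rw [hQ k (by omega)] at h3
    have h4 := i2.sub (h3.comp (hψ (k + 1) (by omega)))
    rw [hψ' (k + 1) (by omega), sub_sub_cancel] at h4
    exact h4

/-- If near a point of the line `{a} × ℝ` the functions `G k` satisfy the equations of motion and
`chainFn` starts with `G 0` and `G 1`, then `chainFn` reproduces `G` there. -/
lemma chain_eventuallyEq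
    (hψ' : ∀ k, k < N → ∀ᶠ y in 𝓝 (Q k - Q (k + 1)), ψ k (φ y) = y) {t : ℝ}
    {G : ℕ → E × ℝ → ℝ} (hG0 : G₀ =ᶠ[𝓝 (a, t)] G 0) (hG1 : G₁ =ᶠ[𝓝 (a, t)] G 1)
    (hGc : ∀ k, k ≤ N → ContinuousAt (G k) (a, t)) (hGQ : ∀ k, k ≤ N → G k (a, t) = Q k)
    (hG : ∀ k, k + 1 < N → ∀ᶠ e in 𝓝 (a, t), lieD f (lieD f (G (k + 1))) e =
      φ (G k e - G (k + 1) e) - φ (G (k + 1) e - G (k + 2) e)) :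
    ∀ k, k + 1 ≤ N → chainFn f φ ψ G₀ G₁ k =ᶠ[𝓝 (a, t)] G k ∧
      chainFn f φ ψ G₀ G₁ (k + 1) =ᶠ[𝓝 (a, t)] G (k + 1) := by
  intro k
  induction k with
  | zero => exact fun _ => ⟨hG0, hG1⟩
  | succ k ih =>
    intro hk
    obtain ⟨i1, i2⟩ := ih (by omega)
    refine ⟨i2, ?_⟩
    have hy : Tendsto (fun e => G (k + 1) e - G (k + 2) e) (𝓝 (a, t))
        (𝓝 (Q (k + 1) - Q (k + 2))) := by
      have := ((hGc (k + 1) (by omega)).sub (hGc (k + 2) (by omega))).tendsto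
      rwa [Pi.sub_apply, hGQ _ (by omega), hGQ _ (by omega)] at this
    filter_upwards [i1, i2, lieD_congr (f := f) (lieD_congr (f := f) i2), hG k (by omega),
      hy.eventually (hψ' (k + 1) (by omega))] with e e1 e2 e3 e4 e5
    simp only [chainFn]
    rw [e1, e2, e3, e4, sub_sub_cancel, e5]
    ring

/-- The functions `chainFn` satisfy the equations of motion. -/
lemma chain_ode (hf : ContDiff ℝ ∞ f) (ha : f a = 0) (hφ : ContDiff ℝ ∞ φ)
    (hQ : ∀ k, k + 1 < N → φ (Q k - Q (k + 1)) = φ (Q (k + 1) - Q (k + 2)))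
    (hψ : ∀ k, k < N → ∀ᶠ z in 𝓝 (φ (Q k - Q (k + 1))), φ (ψ k z) = z)
    (hs : ∀ k, k ≤ N → SmoothAlong a (chainFn f φ ψ G₀ G₁ k) (Q k)) (k : ℕ) (hk : k + 1 < N)
    (t : ℝ) :
    ∀ᶠ e in 𝓝 (a, t), lieD f (lieD f (chainFn f φ ψ G₀ G₁ (k + 1))) e =
      φ (chainFn f φ ψ G₀ G₁ k e - chainFn f φ ψ G₀ G₁ (k + 1) e) -
        φ (chainFn f φ ψ G₀ G₁ (k + 1) e - chainFn f φ ψ G₀ G₁ (k + 2) e) := by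
  have h3 := chain_arg hf ha hφ (hs k (by omega)) (hs (k + 1) (by omega)) t
  rw [hQ k hk] at h3
  have h4 : Tendsto _ _ _ := h3.1.continuousAt
  have h5 := h3.2
  simp only at h4 h5
  rw [h5] at h4
  filter_upwards [h4.eventually (hψ (k + 1) (by omega))] with e he
  simp only [chainFn] at he ⊢
  rw [sub_sub_cancel, he]
  ring

end TotalDerivative

lemma exists_local_inverse {φ : ℝ → ℝ} (hφ : ContDiff ℝ ∞ φ) {y : ℝ} (hy : deriv φ y ≠ 0) :
    ∃ ψ : ℝ → ℝ, ContDiffAt ℝ ∞ ψ (φ y) ∧ (∀ᶠ u in 𝓝 y, ψ (φ u) = u) ∧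
      ∀ᶠ v in 𝓝 (φ y), φ (ψ v) = v := by
  have h1 : HasStrictDerivAt φ (deriv φ y) y := hφ.contDiffAt.hasStrictDerivAt (by simp)
  have h2 := h1.hasStrictFDerivAt_equiv hy
  exact ⟨_, hφ.contDiffAt.to_localInverse h2.hasFDerivAt (by simp),
    HasStrictFDerivAt.eventually_left_inverse _, HasStrictFDerivAt.eventually_right_inverse _⟩

/-! ### Local controllability at a regular equilibrium -/

/-- The cutoff, equal to `1` for `t ≤ 1/3` and to `0` for `t ≥ 2/3`. -/
def cutoff (t : ℝ) : ℝ := Real.smoothTransition (2 - 3 * t)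

lemma cutoff_contDiff : ContDiff ℝ ∞ cutoff :=
  (Real.smoothTransition.contDiff (n := ⊤)).comp (by fun_prop)

lemma cutoff_eventually_one : ∀ᶠ t in 𝓝 (0 : ℝ), cutoff t = 1 := by
  filter_upwards [eventually_lt_nhds (show (0 : ℝ) < 1 / 3 by norm_num)] with t ht
  exact Real.smoothTransition.one_of_one_le (by linarith)

lemma cutoff_eventually_zero : ∀ᶠ t in 𝓝 (1 : ℝ), cutoff t = 0 := by
  filter_upwards [eventually_gt_nhds (show (2 / 3 : ℝ) < 1 by norm_num)] with t ht
  exact Real.smoothTransition.zero_of_nonpos (by linarith)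

/-- Every state near a regular equilibrium can be steered exactly to it. The positions of the first
two particles are made to follow a free motion of the closed loop first and to stay at their
equilibrium values at the end; they determine all other positions through `chainFn`. -/
lemma RegularEq.eventually_step {n : ℕ} [NeZero n] (hn : 3 ≤ n) {Φ : ℝ → ℝ} (h : Admissible Φ)
    {l : ℝ} {xs : State n} (hx : RegularEq n Φ l xs) : ∀ᶠ z in 𝓝 xs, Step n Φ z xs := by
  have hφ : ContDiff ℝ ∞ (deriv Φ) := h.contDiff_deriv
  set φ := deriv Φ with hφdef
  have hf : ContDiff ℝ ∞ (damped n Φ l) := contDiff_damped hφ l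
  have ha : damped n Φ l xs = 0 := hx.rest
  set f := damped n Φ l with hfdef
  have hxs2 : xs.2 = 0 := congrArg Prod.fst ha
  -- `c k` is the index `k` in `Fin n`; only `k < n` matters.
  set c : ℕ → Fin n := fun k => Fin.ofNat n k with hc
  have cval : ∀ k : Fin n, c k.val = k := fun k => Fin.ext (Nat.mod_eq_of_lt k.2)
  have cv : ∀ k, k < n → (c k).val = k := fun k hk => Nat.mod_eq_of_lt hk
  have cne : ∀ k, k < n - 1 → c k ≠ -1 := fun k hk e => by
    have := congrArg Fin.val e
    rw [cv k (by omega), val_neg_one n hn] at this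
    omega
  have csucc : ∀ k, k < n - 1 → c (k + 1) = c k + 1 := fun k hk => Fin.ext (by
    rw [val_succ_of_ne n hn _ (cne k hk), cv _ (by omega), cv _ (by omega)])
  set Q : ℕ → ℝ := fun k => xs.1 (c k) with hQdef
  have hint : ∀ k, k + 1 < n - 1 → ∀ x : State n, (f x).2 (c (k + 1)) =
      φ (x.1 (c k) - x.1 (c (k + 1))) - φ (x.1 (c (k + 1)) - x.1 (c (k + 2))) := by
    intro k hk x
    have h0 : c (k + 1) ≠ 0 := fun e => by
      have := congrArg Fin.val e
      rw [cv _ (by omega)] at this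
      simp at this
    rw [hfdef, damped_interior x h0 (cne _ hk)]
    simp only [drift]
    rw [← csucc (k + 1) hk, csucc k (by omega), add_sub_cancel_right]
  have hQ : ∀ k, k + 1 < n - 1 → φ (Q k - Q (k + 1)) = φ (Q (k + 1) - Q (k + 2)) := by
    intro k hk
    have := hint k hk xs
    rw [ha] at this
    simp only [Prod.snd_zero, Pi.zero_apply] at this
    simp only [hQdef]
    linarith
  have hex : ∀ k, ∃ ψ : ℝ → ℝ, k < n - 1 → ContDiffAt ℝ ∞ ψ (φ (Q k - Q (k + 1))) ∧
      (∀ᶠ u in 𝓝 (Q k - Q (k + 1)), ψ (φ u) = u) ∧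
      ∀ᶠ v in 𝓝 (φ (Q k - Q (k + 1))), φ (ψ v) = v := by
    intro k
    by_cases hk : k < n - 1
    · have := hx.regular (c k) (cne k hk)
      rw [← csucc k hk] at this
      obtain ⟨ψ, hψ⟩ := exists_local_inverse hφ this
      exact ⟨ψ, fun _ => hψ⟩
    · exact ⟨id, fun h => absurd h hk⟩
  choose ψ hψ using hex
  set G₀ : State n × ℝ → ℝ := fun e => Q 0 + cutoff e.2 * (e.1.1 (c 0) - Q 0) with hG₀
  set G₁ : State n × ℝ → ℝ := fun e => Q 1 + cutoff e.2 * (e.1.1 (c 1) - Q 1) with hG₁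
  have hcut : ContDiff ℝ ∞ (fun e : State n × ℝ => cutoff e.2) := cutoff_contDiff.comp contDiff_snd
  have hs0 : SmoothAlong xs G₀ (Q 0) := fun t =>
    ⟨(contDiff_const.add (hcut.mul (by fun_prop))).contDiffAt, by simp [hG₀, hQdef]⟩
  have hs1 : SmoothAlong xs G₁ (Q 1) := fun t =>
    ⟨(contDiff_const.add (hcut.mul (by fun_prop))).contDiffAt, by simp [hG₁, hQdef]⟩
  set R : ℕ → State n × ℝ → ℝ := chainFn f φ ψ G₀ G₁ with hR
  have pair_all : ∀ {P : ℕ → Prop}, (∀ k, k + 1 ≤ n - 1 → P k ∧ P (k + 1)) →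
      ∀ k, k ≤ n - 1 → P k := by
    intro P hP k hk
    rcases Nat.lt_or_ge k (n - 1) with h1 | h1
    · exact (hP k h1).1
    · obtain ⟨j, rfl⟩ : ∃ j, k = j + 1 := ⟨k - 1, by omega⟩
      exact (hP j hk).2
  have hs : ∀ k, k ≤ n - 1 → SmoothAlong xs (R k) (Q k) :=
    pair_all (chain_smooth hf ha hφ hs0 hs1 hQ (fun k hk => (hψ k hk).1)
      fun k hk => (hψ k hk).2.1.self_of_nhds)
  have hode := chain_ode (G₀ := G₀) (G₁ := G₁) hf ha hφ hQ (fun k hk => (hψ k hk).2.2) hs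
  -- For small times the chain follows the closed loop.
  have hstart : ∀ k, k ≤ n - 1 → R k =ᶠ[𝓝 (xs, 0)] fun e => e.1.1 (c k) := by
    have hL1 : ∀ k, lieD f (fun e : State n × ℝ => e.1.1 (c k)) = fun e => e.1.2 (c k) := fun k =>
      lieD_linear (f := f) ((ContinuousLinearMap.proj (R := ℝ) (φ := fun _ : Fin n => ℝ) (c k)).comp
        (ContinuousLinearMap.fst ℝ (Fin n → ℝ) (Fin n → ℝ)))
    have hL2 : ∀ k, lieD f (fun e : State n × ℝ => e.1.2 (c k)) = fun e => (f e.1).2 (c k) :=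
      fun k =>
      lieD_linear (f := f) ((ContinuousLinearMap.proj (R := ℝ) (φ := fun _ : Fin n => ℝ) (c k)).comp
        (ContinuousLinearMap.snd ℝ (Fin n → ℝ) (Fin n → ℝ)))
    have hone : ∀ᶠ e : State n × ℝ in 𝓝 (xs, 0), cutoff e.2 = 1 :=
      (continuous_snd.tendsto (xs, (0 : ℝ))).eventually cutoff_eventually_one
    refine pair_all (chain_eventuallyEq (f := f) (G := fun k e => e.1.1 (c k))
      (fun k hk => (hψ k hk).2.1) ?_ ?_ ?_ (fun k _ => rfl) ?_)
    · filter_upwards [hone] with e he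
      simp [hG₀, he]
    · filter_upwards [hone] with e he
      simp [hG₁, he]
    · intro k _
      fun_prop
    · intro k hk
      refine Eventually.of_forall fun e => ?_
      rw [hL1, hL2]
      exact hint k hk e.1
  -- For late times the chain is at rest.
  have hend : ∀ k, k ≤ n - 1 → R k =ᶠ[𝓝 (xs, 1)] fun _ => Q k := by
    have hzero : ∀ᶠ e : State n × ℝ in 𝓝 (xs, 1), cutoff e.2 = 0 :=
      (continuous_snd.tendsto (xs, (1 : ℝ))).eventually cutoff_eventually_zero
    refine pair_all (chain_eventuallyEq (f := f) (G := fun k _ => Q k)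
      (fun k hk => (hψ k hk).2.1) ?_ ?_ (fun k _ => continuousAt_const) (fun k _ => rfl) ?_)
    · filter_upwards [hzero] with e he
      simp [hG₀, he]
    · filter_upwards [hzero] with e he
      simp [hG₁, he]
    · intro k hk
      refine Eventually.of_forall fun e => ?_
      rw [lieD_const, lieD_const, hQ k hk, sub_self]
  have hstart' : ∀ᶠ z in 𝓝 xs, ∀ k : Fin n, R k.val (z, 0) = z.1 k ∧
      lieD f (R k.val) (z, 0) = z.2 k := by
    have hcts : Tendsto (fun z : State n => (z, (0 : ℝ))) (𝓝 xs) (𝓝 (xs, 0)) :=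
      (by fun_prop : Continuous fun z : State n => (z, (0 : ℝ))).tendsto xs
    refine eventually_all.2 fun k => hcts.eventually
      (p := fun e => R k.val e = e.1.1 k ∧ lieD f (R k.val) e = e.1.2 k) ?_
    have h1 := hstart k.val (by omega)
    filter_upwards [h1, lieD_congr (f := f) h1] with e e1 e2
    rw [e1, e2, cval]
    refine ⟨rfl, ?_⟩
    exact congrFun (lieD_linear (f := f) ((ContinuousLinearMap.proj (R := ℝ)
      (φ := fun _ : Fin n => ℝ) k).comp (ContinuousLinearMap.fst ℝ (Fin n → ℝ) (Fin n → ℝ)))) e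
  have hend' : ∀ᶠ z in 𝓝 xs, ∀ k : Fin n, R k.val (z, 1) = xs.1 k ∧
      lieD f (R k.val) (z, 1) = 0 := by
    have hcts : Tendsto (fun z : State n => (z, (1 : ℝ))) (𝓝 xs) (𝓝 (xs, 1)) :=
      (by fun_prop : Continuous fun z : State n => (z, (1 : ℝ))).tendsto xs
    refine eventually_all.2 fun k => hcts.eventually
      (p := fun e => R k.val e = xs.1 k ∧ lieD f (R k.val) e = 0) ?_
    have h1 := hend k.val (by omega)
    filter_upwards [h1, lieD_congr (f := f) h1] with e e1 e2
    rw [e1, e2, lieD_const]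
    exact ⟨by rw [hQdef]; simp only [cval], rfl⟩
  have hmid : ∀ᶠ z in 𝓝 xs, ∀ t ∈ Icc (0 : ℝ) 1, ∀ k : Fin n, ContDiffAt ℝ 3 (R k.val) (z, t) ∧
      (k.val + 1 < n - 1 → lieD f (lieD f (R (k.val + 1))) (z, t) =
        φ (R k.val (z, t) - R (k.val + 1) (z, t)) -
          φ (R (k.val + 1) (z, t) - R (k.val + 2) (z, t))) := by
    refine isCompact_Icc.eventually_forall_of_forall_eventually fun t _ =>
      eventually_all.2 fun k => ?_
    have hle : ∀ m : ℕ, (m : WithTop ℕ∞) ≤ ∞ := fun m => by exact_mod_cast le_top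
    have h1 : ∀ᶠ e in 𝓝 (xs, t), ContDiffAt ℝ 3 (R k.val) e :=
      (((hs k.val (by omega)) t).1.of_le (hle 3)).eventually
        (by decide)
    by_cases hk : k.val + 1 < n - 1
    · filter_upwards [h1, hode k.val hk t] with e e1 e2
      exact ⟨e1, fun _ => e2⟩
    · filter_upwards [h1] with e e1
      exact ⟨e1, fun h => absurd h hk⟩
  obtain ⟨ρ, hρ, hball⟩ := Metric.eventually_nhds_iff.1 (hmid.and hend')
  obtain ⟨C, δ, hδ, H⟩ := exists_perturbed_solution (F := f) (X := fun _ => xs) (b := fun _ => 0)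
    (hf.of_le (by exact_mod_cast le_top)) one_pos continuousOn_const
    (fun t _ => by simpa [ha] using hasDerivWithinAt_const t (Icc (0 : ℝ) 1) xs)
  have hsmall : ∀ᶠ z in 𝓝 xs, ‖z - xs‖ < δ ∧ C * ‖z - xs‖ < ρ := by
    have h1 : Tendsto (fun z => ‖z - xs‖) (𝓝 xs) (𝓝 0) :=
      tendsto_iff_norm_sub_tendsto_zero.1 tendsto_id
    have h2 : Tendsto (fun z => C * ‖z - xs‖) (𝓝 xs) (𝓝 0) := by simpa using h1.const_mul C
    exact (h1.eventually_lt_const hδ).and (h2.eventually_lt_const hρ)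
  filter_upwards [hstart', hsmall] with z hz0 hz
  obtain ⟨Y, hY0, hY⟩ := H z hz.1
  have hYd : ∀ t ∈ Icc (0 : ℝ) 1, HasDerivWithinAt Y (f (Y t)) (Icc 0 1) t := fun t ht => by
    simpa using (hY t ht).1
  have hYb : ∀ t ∈ Icc (0 : ℝ) 1, dist (Y t) xs < ρ := fun t ht => by
    rw [dist_eq_norm]
    exact (hY t ht).2.trans_lt hz.2
  have hsm : ∀ t ∈ Icc (0 : ℝ) 1, ∀ k : Fin n, ContDiffAt ℝ 3 (R k.val) (Y t, t) := fun t ht k =>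
    ((hball (hYb t ht)).1 t ht k).1
  have hf3 : ∀ m : ℕ, ContDiff ℝ m f := fun m => hf.of_le (by exact_mod_cast le_top)
  have hsm2 : ∀ t ∈ Icc (0 : ℝ) 1, ∀ k : Fin n, ContDiffAt ℝ 2 (lieD f (R k.val)) (Y t, t) :=
    fun t ht k => lieD_contDiffAt (hf3 2) (hsm t ht k) (by norm_num)
  have hsm3 : ∀ t ∈ Icc (0 : ℝ) 1, ∀ k : Fin n,
      ContDiffAt ℝ 1 (lieD f (lieD f (R k.val))) (Y t, t) :=
    fun t ht k => lieD_contDiffAt (hf3 1) (hsm2 t ht k) (by norm_num)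
  have hYc : ∀ t ∈ Icc (0 : ℝ) 1, ContinuousWithinAt (fun t => (Y t, t)) (Icc 0 1) t := fun t ht =>
    (hYd t ht).continuousWithinAt.prodMk continuousWithinAt_id
  refine ⟨1, one_pos, fun t => (fun k => R k.val (Y t, t), fun k => lieD f (R k.val) (Y t, t)),
    fun t => (fun k => lieD f (R k.val) (Y t, t), fun k => lieD f (lieD f (R k.val)) (Y t, t)),
    ⟨?_, fun t ht => ⟨?_, rfl, fun k hk hk' => ?_⟩⟩, ?_, ?_⟩
  · intro t ht
    refine ContinuousWithinAt.prodMk (continuousWithinAt_pi.2 fun k => ?_)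
      (continuousWithinAt_pi.2 fun k => ?_)
    · exact (hsm2 t ht k).continuousAt.comp_continuousWithinAt (f := fun t => (Y t, t)) (hYc t ht)
    · exact (hsm3 t ht k).continuousAt.comp_continuousWithinAt (f := fun t => (Y t, t)) (hYc t ht)
  · refine HasDerivWithinAt.prodMk (hasDerivWithinAt_pi.2 fun k => ?_)
      (hasDerivWithinAt_pi.2 fun k => ?_)
    · exact hasDerivWithinAt_lieD ((hsm t ht k).differentiableAt (by norm_num)) (hYd t ht)
    · exact hasDerivWithinAt_lieD ((hsm2 t ht k).differentiableAt (by norm_num)) (hYd t ht)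
  · have e1 : k.val = (k - 1).val + 1 := by
      have := val_succ_of_ne n hn (k - 1) (pred_ne_of_ne n k hk)
      rwa [sub_add_cancel] at this
    have e2 : (k + 1).val = (k - 1).val + 2 := by
      rw [val_succ_of_ne n hn k hk', e1]
    have := ((hball (hYb t ht)).1 t ht (k - 1)).2 (by have := (k + 1).2; omega)
    simp only [drift]
    rw [e2, e1]
    exact this
  · simp only [hY0]
    exact Prod.ext (funext fun k => (hz0 k).1) (funext fun k => (hz0 k).2)
  · have hb := (hball (hYb 1 ⟨zero_le_one, le_rfl⟩)).2
    refine Prod.ext (funext fun k => (hb k).1) ?_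
    rw [hxs2]
    exact funext fun k => (hb k).2

/-! ### From local to global controllability -/

lemma Reach.eventually {n : ℕ} [NeZero n] {Φ : ℝ → ℝ} (hφ : ContDiff ℝ 1 (deriv Φ))
    {a b : State n} (h : Reach n Φ a b) (hb : ∀ᶠ z in 𝓝 b, Reach n Φ z b) :
    ∀ᶠ z in 𝓝 a, Reach n Φ z b := by
  induction h using Relation.ReflTransGen.head_induction_on with
  | refl => exact hb
  | head h _ ih =>
    filter_upwards [h.eventually hφ ih] with z hz
    obtain ⟨w, hw, hzw⟩ := hz
    exact Relation.ReflTransGen.head hzw hw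

/-- Every state can be steered exactly, in positive time, to a state of rest that is reached from
all states near the initial one. -/
lemma Admissible.exists_rest {n : ℕ} [NeZero n] (hn : 3 ≤ n) {Φ : ℝ → ℝ} (h : Admissible Φ)
    (x : State n) : ∃ q : Fin n → ℝ, Relation.TransGen (Step n Φ) x (q, 0) ∧
      ∀ᶠ z in 𝓝 x, Reach n Φ z (q, 0) := by
  obtain ⟨l, hl⟩ := h.exists_regularEq (n := n) hn
  obtain ⟨y, hy, hreg⟩ := hl x
  have hstep := hreg.eventually_step hn h
  have hy0 : y = (y.1, 0) := Prod.ext rfl (congrArg Prod.fst hreg.rest)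
  obtain ⟨w, hw, hxw⟩ := mem_closure_iff_nhds.1 hy _ hstep
  have hxy : Relation.TransGen (Step n Φ) x y := Relation.TransGen.tail' hxw hw
  refine ⟨y.1, ?_⟩
  rw [← hy0]
  exact ⟨hxy, Reach.eventually h.contDiff_deriv hxy.to_reflTransGen
    (hstep.mono fun z hz => Relation.ReflTransGen.single hz)⟩

lemma rev_rest {n : ℕ} (q : Fin n → ℝ) : rev ((q, 0) : State n) = (q, 0) := by simp [rev]

/-- Any two states of rest are reachable from each other: by time reversal, reachability between
states of rest is an equivalence relation, and its classes are open. -/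
lemma Admissible.reach_rest {n : ℕ} [NeZero n] (hn : 3 ≤ n) {Φ : ℝ → ℝ} (h : Admissible Φ)
    (q q' : Fin n → ℝ) : Reach n Φ (q, 0) (q', 0) := by
  have hsymm : ∀ q q' : Fin n → ℝ, Reach n Φ (q, 0) (q', 0) → Reach n Φ (q', 0) (q, 0) :=
    fun q q' h => by simpa only [rev_rest] using h.reverse
  have : Std.Symm fun q q' : Fin n → ℝ => Reach n Φ (q, 0) (q', 0) := ⟨hsymm⟩
  refine PreconnectedSpace.induction₂ (fun q q' : Fin n → ℝ => Reach n Φ (q, 0) (q', 0))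
    (fun q => ?_) ⟨fun _ _ _ h1 h2 => Relation.ReflTransGen.trans h1 h2⟩ q q'
  obtain ⟨r, hr, hev⟩ := h.exists_rest hn (q, 0)
  have hcts : Tendsto (fun q' : Fin n → ℝ => ((q', 0) : State n)) (𝓝 q) (𝓝 (q, 0)) :=
    (by fun_prop : Continuous fun q' : Fin n → ℝ => ((q', 0) : State n)).tendsto q
  filter_upwards [hcts.eventually hev] with q' hq'
  exact hr.to_reflTransGen.trans (hsymm _ _ hq')

lemma ctrlReach_of_transGen {n : ℕ} [NeZero n] (hn : 3 ≤ n) {Φ : ℝ → ℝ}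
    (hφ : Continuous (deriv Φ)) {a b : State n} (h : Relation.TransGen (Step n Φ) a b) :
    CtrlReach n Φ a b := by
  induction h with
  | single h => exact h.ctrlReach hn hφ
  | tail _ h ih => exact ih.trans hφ (h.ctrlReach hn hφ)

/-- Global controllability of the double forced periodic multiparticle system. -/
theorem double_force_global_controllability
    (n : ℕ) [NeZero n] (hn : 3 ≤ n) (Φ : ℝ → ℝ) (hadm : Admissible Φ)
    (xtil xhat : State n) :
    ∃ (θ : ℝ) (u v : ℝ → ℝ) (x : ℝ → State n),
      0 < θ ∧ Measurable u ∧ Measurable v ∧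
      (∃ C : ℝ, ∀ᵐ t : ℝ ∂volume, t ∈ Set.Icc (0:ℝ) θ → |u t| ≤ C ∧ |v t| ≤ C) ∧
      IsTrajectory2 n Φ θ u v x ∧ x 0 = xtil ∧ x θ = xhat := by
  have hφ : Continuous (deriv Φ) := (hadm.contDiff_deriv (m := 1)).continuous
  obtain ⟨q₁, h1, -⟩ := hadm.exists_rest hn xtil
  obtain ⟨q₂, h2, -⟩ := hadm.exists_rest hn (rev xhat)
  -- Time reversal turns the route from `rev xhat` to rest into a route from rest to `xhat`.
  have h3 : Reach n Φ (q₂, 0) xhat := by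
    simpa only [rev_rest, rev_rev] using Reach.reverse h2.to_reflTransGen
  obtain ⟨θ, u, v, x, hθ, hu, hv, ⟨C, hC⟩, hx, hi, h0, hT⟩ := ctrlReach_of_transGen hn hφ
    ((h1.trans_left (hadm.reach_rest hn q₁ q₂)).trans_left h3)
  exact ⟨θ, u, v, x, hθ, hu, hv, ⟨C, Eventually.of_forall fun t _ => hC t⟩,
    ⟨hx.continuousOn, hi⟩, h0, hT⟩
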